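/- Let G be a finite group and p a prime. If k(G) ≥ (3/p²)·|G|, then G is p-solvable. -/

import Mathlib

/-- A group `G` is `p`-solvable if it has a subnormal series `⊥ = H₀ ⊴ H₁ ⊴ ⋯ ⊴ Hₙ = ⊤`
in which each factor `H_{i+1}/H_i` is either a `p`-group or has order coprime to `p`. -/
def IsPSolvable (p : ℕ) (G : Type*) [Group G] : Prop :=
  ∃ (n : ℕ) (H : Fin (n + 1) → Subgroup G),
    H 0 = ⊥ ∧ H (Fin.last n) = ⊤ ∧
    (∀ i : Fin n, H i.castSucc ≤ H i.succ) ∧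
    (∀ i : Fin n, ∃ _ : ((H i.castSucc).subgroupOf (H i.succ)).Normal,
      IsPGroup p (↥(H i.succ) ⧸ (H i.castSucc).subgroupOf (H i.succ)) ∨
      (Nat.card (↥(H i.succ) ⧸ (H i.castSucc).subgroupOf (H i.succ))).Coprime p)

/-!
The ratio `k(G) / |G|` does not decrease on passing to subgroups and quotients, so a counterexample
of minimal order is a nonabelian simple group of order divisible by `p`, all of whose proper
subgroups are `p`-solvable. For such a group `k(G) p² < 3 |G|`, by comparing `k(G)` with the sum
`|G|` of the squared character degrees. Let `P` be a Sylow `p`-subgroup.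

* If `p = 2`, all nontrivial degrees are at least `2`.
* Let `p` be odd and `|P| ≥ p²`. If all nontrivial degrees are at least `p - 1`, the degree sum
  suffices. Otherwise `G` has a faithful representation of degree less than `p - 1`, and by an
  argument of Itô the `p`-elements of each proper subgroup commute. For `1 ≠ y ∈ P` this gives
  `|P| |C(y)| ≤ |G|`, and comparing the eigenvalue multiplicities of `y` in all irreducible
  representations with `|C(y)|` bounds `k(G)`.
* If `P = ⟨y⟩` has order `p`, then `C(y) = ⟨y⟩ × K`. Let `E = N(P) / C(P)`, of order `e`, and
  `p - 1 = e f`. Eigenvalue multiplicities of `y` are constant on the orbits of `E`, which sharpens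
  the eigenvalue count enough when `f ≤ e + 2`. If `f ≥ e + 3`, the method of special classes gives
  virtual characters of small norm, and an irreducible constituent of some `χχ̄` shows that
  all nontrivial degrees are at least `e (f - 1)`.
-/

open Module Representation Finset
open scoped MonoidAlgebra

attribute [local instance 10] Fintype.ofFinite

/-! ### Irreducible complex representations -/

section Multiplicity

variable {G V W : Type*} [Group G] [Finite G]
  [AddCommGroup V] [Module ℂ V] [FiniteDimensional ℂ V]
  [AddCommGroup W] [Module ℂ W] [FiniteDimensional ℂ W]

theorem cast_natCard_ne_zero (G : Type*) [Nonempty G] [Finite G] : (Nat.card G : ℂ) ≠ 0 :=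
  Nat.cast_ne_zero.mpr Nat.card_pos.ne'

/-- The multiplicity of `σ` in `ρ` (in the usual sense when `σ` is irreducible): the dimension of
the space of intertwining maps from `σ` to `ρ`. -/
noncomputable def mult (ρ : Representation ℂ G V) (σ : Representation ℂ G W) : ℕ :=
  finrank ℂ (IntertwiningMap σ ρ)

theorem card_mul_mult [Fintype G] (ρ : Representation ℂ G V) (σ : Representation ℂ G W) :
    (Nat.card G : ℂ) * mult ρ σ = ∑ g, ρ.character g * σ.character g⁻¹ := by
  have := invertibleOfNonzero (cast_natCard_ne_zero G)
  rw [mult, ← card_inv_mul_sum_char_mul_char_eq_finrank,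
    mul_inv_cancel_left₀ (cast_natCard_ne_zero G)]

theorem eq_one_of_forall_character_eq (ρ : Representation ℂ G V)
    (h : ∀ g, ρ.character g = finrank ℂ V) (g : G) : ρ g = 1 := by
  have := invertibleOfNonzero (cast_natCard_ne_zero G)
  have hfix : (finrank ℂ ρ.invariants : ℂ) = finrank ℂ V := by
    rw [← card_inv_mul_sum_char_eq_finrank]
    simp only [h, sum_const, card_univ, nsmul_eq_mul, ← Nat.card_eq_fintype_card]
    exact inv_mul_cancel_left₀ (cast_natCard_ne_zero G) _
  have htop : ρ.invariants = ⊤ := Submodule.eq_top_of_finrank_eq (by exact_mod_cast hfix)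
  ext v
  exact (htop ▸ Submodule.mem_top : v ∈ ρ.invariants) g

end Multiplicity

theorem exists_wedderburn (G : Type*) [Group G] [Finite G] :
    ∃ (r : ℕ) (d : Fin r → ℕ), (∀ i, NeZero (d i)) ∧
      Nonempty (ℂ[G] ≃ₐ[ℂ] Π i, Matrix (Fin (d i)) (Fin (d i)) ℂ) :=
  IsSemisimpleRing.exists_algEquiv_pi_matrix_of_isAlgClosed ℂ ℂ[G]

/-- The irreducible complex representations of `G` up to isomorphism, encoded as the labels of the
matrix blocks of a chosen Wedderburn decomposition of `ℂ[G]`. -/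
def Irr (G : Type*) [Group G] [Finite G] : Type := Fin (exists_wedderburn G).choose

namespace Irr

variable {G : Type*} [Group G] [Finite G]

noncomputable instance : Fintype (Irr G) := inferInstanceAs (Fintype (Fin _))

noncomputable instance : DecidableEq (Irr G) := inferInstanceAs (DecidableEq (Fin _))

/-- The degree of an irreducible representation. -/
noncomputable def degree (X : Irr G) : ℕ := (exists_wedderburn G).choose_spec.choose X

instance (X : Irr G) : NeZero X.degree := (exists_wedderburn G).choose_spec.choose_spec.1 X

theorem degree_pos (X : Irr G) : 0 < X.degree := Nat.pos_of_neZero _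

/-- The chosen Wedderburn decomposition of `ℂ[G]`. -/
noncomputable def wedderburn (G : Type*) [Group G] [Finite G] :
    ℂ[G] ≃ₐ[ℂ] Π X : Irr G, Matrix (Fin X.degree) (Fin X.degree) ℂ :=
  (exists_wedderburn G).choose_spec.choose_spec.2.some

/-- The irreducible representation of `G` labelled by `X`: the action of `G` on column vectors
through the block `X`. -/
noncomputable def rep (X : Irr G) : Representation ℂ G (Fin X.degree → ℂ) :=
  ((Matrix.toLinAlgEquiv' : Matrix (Fin X.degree) (Fin X.degree) ℂ ≃ₐ[ℂ] _).toAlgHom.comp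
    ((Pi.evalAlgHom ℂ _ X).comp (wedderburn G).toAlgHom)).toMonoidHom.comp (MonoidAlgebra.of ℂ G)

theorem asAlgebraHom_rep (X : Irr G) (a : ℂ[G]) :
    X.rep.asAlgebraHom a = Matrix.toLin' (wedderburn G a X) := by
  have h : X.rep.asAlgebraHom =
      (Matrix.toLinAlgEquiv' : Matrix (Fin X.degree) _ ℂ ≃ₐ[ℂ] _).toAlgHom.comp
        ((Pi.evalAlgHom ℂ _ X).comp (wedderburn G).toAlgHom) := by
    ext g : 2
    simp [rep]
  rw [h]
  rfl

theorem character_rep (X : Irr G) (g : G) :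
    X.rep.character g = (wedderburn G (MonoidAlgebra.of ℂ G g) X).trace := by
  rw [character, ← asAlgebraHom_of, asAlgebraHom_rep, Matrix.trace_toLin'_eq]

theorem character_rep_one (X : Irr G) : X.rep.character 1 = X.degree := by simp

/-- The idempotent of `ℂ[G]` acting as the identity on the block `X` and as zero on the others. -/
noncomputable def centralIdempotent (X : Irr G) : ℂ[G] := (wedderburn G).symm (Pi.single X 1)

theorem asAlgebraHom_rep_centralIdempotent (X Y : Irr G) :
    Y.rep.asAlgebraHom X.centralIdempotent = if Y = X then 1 else 0 := by
  rw [asAlgebraHom_rep, centralIdempotent, AlgEquiv.apply_symm_apply]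
  split_ifs with h
  · subst h
    rw [Pi.single_eq_same, Matrix.toLin'_one, Module.End.one_eq_id]
  · rw [Pi.single_eq_of_ne h, map_zero]

theorem asAlgebraHom_rep_surjective (X : Irr G) : Function.Surjective X.rep.asAlgebraHom := fun f =>
  ⟨(wedderburn G).symm (Pi.single X (LinearMap.toMatrix' f)), by simp [asAlgebraHom_rep]⟩

end Irr

theorem isIrreducible_of_asAlgebraHom_surjective {k G V : Type*} [Field k] [Monoid G]
    [AddCommGroup V] [Module k V] [Nontrivial V] (ρ : Representation k G V)
    (h : Function.Surjective ρ.asAlgebraHom) : ρ.IsIrreducible := by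
  rw [irreducible_iff_isSimpleModule_asModule, isSimpleModule_iff_toSpanSingleton_surjective]
  refine ⟨inferInstanceAs (Nontrivial V), fun (v : V) (hv : v ≠ 0) (w : V) => ?_⟩
  obtain ⟨f, hf⟩ := IsSimpleModule.toSpanSingleton_surjective (Module.End k V) hv w
  obtain ⟨a, rfl⟩ := h f
  exact ⟨a, hf⟩

namespace Irr

variable {G V : Type*} [Group G] [Finite G] [AddCommGroup V] [Module ℂ V] [FiniteDimensional ℂ V]

instance (X : Irr G) : X.rep.IsIrreducible :=
  isIrreducible_of_asAlgebraHom_surjective _ X.asAlgebraHom_rep_surjective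

theorem exists_eq_smul_of_commute (X : Irr G) (f : Module.End ℂ (Fin X.degree → ℂ))
    (hf : ∀ g, Commute f (X.rep g)) : ∃ c : ℂ, f = c • 1 := by
  let F : IntertwiningMap X.rep X.rep := ⟨f, hf⟩
  obtain ⟨c, hc⟩ :=
    (IsIrreducible.algebraMap_intertwiningMap_bijective_of_isAlgClosed (ρ := X.rep)).2 F
  exact ⟨c, (congrArg IntertwiningMap.toLinearMap hc).symm⟩

theorem intertwiningMap_eq_zero {X Y : Irr G} (h : X ≠ Y) (f : IntertwiningMap X.rep Y.rep) :
    f = 0 := by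
  refine IntertwiningMap.ext <| LinearMap.ext fun v => ?_
  have hf := (IntertwiningMap.equivLinearMapAsModule X.rep Y.rep f).map_smul X.centralIdempotent v
  change f (X.rep.asAlgebraHom X.centralIdempotent v) =
    Y.rep.asAlgebraHom X.centralIdempotent (f v) at hf
  rw [asAlgebraHom_rep_centralIdempotent, asAlgebraHom_rep_centralIdempotent, if_pos rfl,
    if_neg h.symm] at hf
  exact hf

theorem mult_rep_rep (X Y : Irr G) : mult X.rep Y.rep = if X = Y then 1 else 0 := by
  split_ifs with h
  · subst h
    exact IsIrreducible.finrank_intertwiningMap_self _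
  · have : Subsingleton (IntertwiningMap Y.rep X.rep) :=
      subsingleton_of_forall_eq 0 (intertwiningMap_eq_zero (Ne.symm h))
    exact finrank_zero_of_subsingleton

theorem sum_character_mul_character_inv [Fintype G] (X Y : Irr G) :
    ∑ g, X.rep.character g * Y.rep.character g⁻¹ = if X = Y then (Nat.card G : ℂ) else 0 := by
  rw [← card_mul_mult, mult_rep_rep]
  split_ifs <;> simp

end Irr

theorem trace_pi_mulLeft_comp_mulRight {ι : Type*} [Fintype ι] {n : ι → Type*}
    [∀ i, Fintype (n i)] (A B : Π i, Matrix (n i) (n i) ℂ) :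
    LinearMap.trace ℂ _ (LinearMap.mulLeft ℂ A ∘ₗ LinearMap.mulRight ℂ B) =
      ∑ i, (A i).trace * (B i).trace := by
  classical
  rw [LinearMap.trace_eq_matrix_trace ℂ (Pi.basis fun i => Matrix.stdBasis ℂ (n i) (n i)),
    Matrix.trace, Fintype.sum_sigma]
  refine sum_congr rfl fun i _ => ?_
  rw [Fintype.sum_prod_type, Matrix.trace, Matrix.trace, Finset.sum_mul_sum]
  refine sum_congr rfl fun a _ => sum_congr rfl fun b _ => ?_
  rw [Matrix.diag_apply, LinearMap.toMatrix_apply, Pi.basis_repr, Pi.basis_apply,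
    Matrix.stdBasis_eq_single]
  change (A i * ((Pi.single i (Matrix.single a b 1) : Π i, Matrix (n i) (n i) ℂ) i * B i)) a b = _
  rw [Pi.single_eq_same, ← Matrix.mul_assoc, Matrix.mul_apply, sum_eq_single b] <;>
    simp +contextual [Matrix.mul_single_apply_of_ne]

theorem trace_groupAlgebra_mulLeft_comp_mulRight {G : Type*} [Group G] [Finite G] (x y : G) :
    LinearMap.trace ℂ ℂ[G] (LinearMap.mulLeft ℂ (MonoidAlgebra.of ℂ G x) ∘ₗ
      LinearMap.mulRight ℂ (MonoidAlgebra.of ℂ G y⁻¹)) = Nat.card {g : G // x * g = g * y} := by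
  classical
  rw [LinearMap.trace_eq_matrix_trace ℂ (MonoidAlgebra.basis G ℂ), Matrix.trace,
    Nat.card_eq_fintype_card, Fintype.card_subtype, card_filter]
  push_cast
  refine sum_congr rfl fun g _ => ?_
  have himage : (LinearMap.mulLeft ℂ (MonoidAlgebra.of ℂ G x) ∘ₗ
      LinearMap.mulRight ℂ (MonoidAlgebra.of ℂ G y⁻¹)) (MonoidAlgebra.basis G ℂ g) =
      MonoidAlgebra.single (x * (g * y⁻¹)) 1 := by
    simp [MonoidAlgebra.single_mul_single]
  have hrepr : (MonoidAlgebra.basis G ℂ).repr (MonoidAlgebra.single (x * (g * y⁻¹)) 1) =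
    Finsupp.single (x * (g * y⁻¹)) 1 := rfl
  rw [Matrix.diag_apply, LinearMap.toMatrix_apply, himage, hrepr, Finsupp.single_apply,
    ← mul_assoc, mul_inv_eq_iff_eq_mul]

namespace Irr

variable {G V : Type*} [Group G] [Finite G] [AddCommGroup V] [Module ℂ V] [FiniteDimensional ℂ V]

theorem sum_irr_character_mul_character_inv (x y : G) :
    ∑ X : Irr G, X.rep.character x * X.rep.character y⁻¹ =
      (Nat.card {g : G // x * g = g * y} : ℂ) := by
  simp only [character_rep]
  rw [← trace_pi_mulLeft_comp_mulRight, ← trace_groupAlgebra_mulLeft_comp_mulRight,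
    ← LinearMap.trace_conj' _ (wedderburn G).toLinearEquiv]
  congr 1
  refine LinearMap.ext fun A => ?_
  simp [LinearEquiv.conj_apply]

theorem sum_irr_character_mul_character_inv_self (x : G) :
    ∑ X : Irr G, X.rep.character x * X.rep.character x⁻¹ =
      (Nat.card (Subgroup.centralizer {x}) : ℂ) := by
  rw [sum_irr_character_mul_character_inv]
  congr 1
  refine Nat.card_congr (Equiv.subtypeEquivRight fun g => ?_)
  rw [Subgroup.mem_centralizer_singleton_iff, eq_comm]

theorem sum_degree_sq : ∑ X : Irr G, X.degree ^ 2 = Nat.card G := by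
  have h := sum_irr_character_mul_character_inv (1 : G) 1
  simp only [inv_one, character_rep_one, one_mul, mul_one] at h
  rw [Nat.card_congr (Equiv.subtypeUnivEquiv fun _ => trivial)] at h
  simp only [← sq] at h
  exact_mod_cast h

theorem card_irr : Fintype.card (Irr G) = Nat.card (ConjClasses G) := by
  have hpairs : (Nat.card {p : G × G // Commute p.1 p.2} : ℂ) =
      Fintype.card (Irr G) * Nat.card G := by
    calc (Nat.card {p : G × G // Commute p.1 p.2} : ℂ)
        = ∑ x : G, ∑ X : Irr G, X.rep.character x * X.rep.character x⁻¹ := by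
          simp only [sum_irr_character_mul_character_inv]
          rw [← Nat.cast_sum, ← Nat.card_sigma]
          exact congrArg _ (Nat.card_congr
            (Equiv.subtypeProdEquivSigmaSubtype fun a b : G => Commute a b))
      _ = _ := by
          rw [sum_comm]
          simp [sum_character_mul_character_inv]
  rw [card_comm_eq_card_conjClasses_mul_card] at hpairs
  exact (Nat.eq_of_mul_eq_mul_right Nat.card_pos (by exact_mod_cast hpairs)).symm

theorem sum_irr_character_mul_sum [Fintype G] (f : G → ℂ) (x : G) :
    ∑ X : Irr G, X.rep.character x * ∑ g, f g * X.rep.character g⁻¹ =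
      ∑ h : G, f (h⁻¹ * x * h) := by
  classical
  calc ∑ X : Irr G, X.rep.character x * ∑ g, f g * X.rep.character g⁻¹
      = ∑ g, f g * ∑ X : Irr G, X.rep.character x * X.rep.character g⁻¹ := by
        simp only [mul_sum]
        rw [sum_comm]
        exact sum_congr rfl fun g _ => sum_congr rfl fun X _ => mul_left_comm _ _ _
    _ = ∑ g, ∑ h : G, if x * h = h * g then f g else 0 := by
        refine sum_congr rfl fun g _ => ?_
        rw [sum_irr_character_mul_character_inv, Nat.card_eq_fintype_card, Fintype.card_subtype,
          card_filter]
        simp [sum_ite, mul_comm]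
    _ = ∑ h : G, f (h⁻¹ * x * h) := by
        rw [sum_comm]
        refine sum_congr rfl fun h _ => ?_
        simp [← inv_mul_eq_iff_eq_mul, mul_assoc]

theorem eq_sum_irr [Fintype G] (f : G → ℂ) (hf : ∀ g h, f (h * g * h⁻¹) = f g) (x : G) :
    Nat.card G * f x = ∑ X : Irr G, (∑ g, f g * X.rep.character g⁻¹) * X.rep.character x := by
  have hconj : ∀ h : G, f (h⁻¹ * x * h) = f x := fun h => by simpa using hf x h⁻¹
  have h := sum_irr_character_mul_sum f x
  simp only [hconj, sum_const, card_univ, nsmul_eq_mul, ← Nat.card_eq_fintype_card] at h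
  simp only [← h, mul_comm]

theorem character_eq_sum_mult (σ : Representation ℂ G V) (g : G) :
    σ.character g = ∑ X : Irr G, mult σ X.rep * X.rep.character g := by
  have h := eq_sum_irr σ.character (fun g h => σ.char_conj g h) g
  simp only [← card_mul_mult, mul_assoc, ← mul_sum] at h
  exact mul_left_cancel₀ (cast_natCard_ne_zero G) h

theorem finrank_eq_sum_mult (σ : Representation ℂ G V) :
    finrank ℂ V = ∑ X : Irr G, mult σ X.rep * X.degree := by
  have h := character_eq_sum_mult σ 1
  simp only [char_one, finrank_fin_fun] at h
  exact_mod_cast h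

theorem degree_le_of_mult_ne_zero {σ : Representation ℂ G V} {X : Irr G}
    (h : mult σ X.rep ≠ 0) : X.degree ≤ finrank ℂ V := by
  rw [finrank_eq_sum_mult σ]
  exact (Nat.le_mul_of_pos_left _ (Nat.pos_of_ne_zero h)).trans
    (single_le_sum (f := fun X => mult σ X.rep * X.degree) (fun _ _ => Nat.zero_le _) (mem_univ X))

theorem eq_one_of_forall_constituent_eq_one (σ : Representation ℂ G V) (c : G)
    (hc : ∀ X : Irr G, mult σ X.rep ≠ 0 → X.rep c = 1) : σ c = 1 := by
  refine eq_one_of_forall_character_eq (σ.comp (Subgroup.zpowers c).subtype) ?_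
    ⟨c, Subgroup.mem_zpowers c⟩
  rintro ⟨_, k, rfl⟩
  change σ.character (c ^ k) = _
  rw [character_eq_sum_mult, finrank_eq_sum_mult σ]
  push_cast
  refine sum_congr rfl fun X _ => ?_
  obtain h0 | h0 := eq_or_ne (mult σ X.rep) 0
  · simp [h0]
  · have hk : X.rep (c ^ k) = 1 := (MonoidHom.ker X.rep).zpow_mem (hc X h0) k
    rw [← character_rep_one X, character, character, hk, map_one X.rep]

theorem exists_rep_eq_one (G : Type*) [Group G] [Finite G] :
    ∃ X : Irr G, X.degree = 1 ∧ ∀ g, X.rep g = 1 := by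
  have hsum := finrank_eq_sum_mult (Representation.trivial ℂ G ℂ)
  obtain ⟨X, -, hX⟩ : ∃ X ∈ (univ : Finset (Irr G)),
      mult (Representation.trivial ℂ G ℂ) X.rep * X.degree ≠ 0 :=
    exists_ne_zero_of_sum_ne_zero (by rw [← hsum, finrank_self]; exact one_ne_zero)
  have : Nontrivial (IntertwiningMap X.rep (Representation.trivial ℂ G ℂ)) :=
    nontrivial_of_finrank_pos (R := ℂ) (Nat.pos_of_ne_zero (left_ne_zero_of_mul hX))
  obtain ⟨f, hf⟩ := exists_ne (0 : IntertwiningMap X.rep (Representation.trivial ℂ G ℂ))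
  have hinj := (IsIrreducible.injective_or_eq_zero f).resolve_right hf
  have hdeg : X.degree ≤ 1 := by
    simpa using degree_le_of_mult_ne_zero (left_ne_zero_of_mul hX)
  refine ⟨X, le_antisymm hdeg X.degree_pos, fun g => LinearMap.ext fun v => hinj ?_⟩
  rw [f.isIntertwining]
  simp

/-- The trivial representation as a member of `Irr G`. -/
noncomputable def trivial (G : Type*) [Group G] [Finite G] : Irr G := (exists_rep_eq_one G).choose

@[simp]
theorem rep_trivial (g : G) : (trivial G).rep g = 1 := (exists_rep_eq_one G).choose_spec.2 g

@[simp]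
theorem degree_trivial : (trivial G).degree = 1 := (exists_rep_eq_one G).choose_spec.1

@[simp]
theorem character_trivial (g : G) : (trivial G).rep.character g = 1 := by
  rw [character, rep_trivial, LinearMap.trace_one, finrank_fin_fun, degree_trivial, Nat.cast_one]

theorem sum_character_eq_zero [Fintype G] {X : Irr G} (h : X ≠ trivial G) :
    ∑ g, X.rep.character g = 0 := by
  simpa [h] using sum_character_mul_character_inv X (trivial G)

end Irr

/-! ### Eigenvalue multiplicities -/

section EigenMult

open ZMod (stdAddChar)

theorem sum_stdAddChar_mul {n : ℕ} [NeZero n] (b : ZMod n) :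
    ∑ x : ZMod n, stdAddChar (b * x) = if b = 0 then (n : ℂ) else 0 := by
  simp_rw [mul_comm b, AddChar.sum_mulShift b (ZMod.isPrimitive_stdAddChar n), ZMod.card]
  split_ifs <;> simp

variable {n : ℕ} [NeZero n] {V : Type*} [AddCommGroup V] [Module ℂ V] [FiniteDimensional ℂ V]
  {f : Module.End ℂ V}

/-- The multiplicity of the `n`-th root of unity `exp(2πij/n)` as an eigenvalue of `f`. -/
noncomputable def eigenMult (f : Module.End ℂ V) (j : ZMod n) : ℕ :=
  finrank ℂ (f.eigenspace (stdAddChar j))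

theorem exists_stdAddChar_eq_of_pow_eq_one {z : ℂ} (hz : z ^ n = 1) :
    ∃ j : ZMod n, stdAddChar j = z := by
  obtain ⟨i, -, hi⟩ := (Complex.isPrimitiveRoot_exp n (NeZero.ne n)).eq_pow_of_pow_eq_one hz
  refine ⟨(i : ℤ), ?_⟩
  rw [ZMod.stdAddChar_coe, ← hi, ← Complex.exp_nat_mul]
  congr 1
  push_cast
  ring

theorem isInternal_eigenspace_stdAddChar (hf : f ^ n = 1) :
    DirectSum.IsInternal fun j : ZMod n => f.eigenspace (stdAddChar j) := by
  refine DirectSum.isInternal_submodule_of_iSupIndep_of_iSup_eq_top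
    (f.eigenspaces_iSupIndep.comp ZMod.injective_stdAddChar) ?_
  have hss : f.IsSemisimple :=
    Module.End.isSemisimple_of_squarefree_aeval_eq_zero (p := Polynomial.X ^ n - 1)
      (Polynomial.separable_X_pow_sub_C (1 : ℂ) (Nat.cast_ne_zero.mpr (NeZero.ne n))
        one_ne_zero).squarefree
      (by simp [hf])
  rw [eq_top_iff, ← hss.iSup_eigenspace_eq_top]
  refine iSup_le fun μ => ?_
  obtain h | h := eq_or_ne (f.eigenspace μ) ⊥
  · simp [h]
  obtain ⟨v, hv⟩ := Module.End.HasEigenvalue.exists_hasEigenvector h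
  have hroot : μ ^ n = 1 := by
    have hpow := hv.pow_apply n
    rw [hf, Module.End.one_apply] at hpow
    exact smul_left_injective ℂ hv.2 (by simpa using hpow.symm)
  obtain ⟨j, rfl⟩ := exists_stdAddChar_eq_of_pow_eq_one hroot
  exact le_iSup (fun j : ZMod n => f.eigenspace (stdAddChar j)) j

theorem trace_pow_eq_sum_eigenMult (hf : f ^ n = 1) (k : ℕ) :
    LinearMap.trace ℂ V (f ^ k) = ∑ j : ZMod n, eigenMult f j * stdAddChar (j * (k : ZMod n)) := by
  have hpow : ∀ (j : ZMod n), ∀ v ∈ f.eigenspace (stdAddChar j),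
      (f ^ k) v = stdAddChar (j * (k : ZMod n)) • v := by
    intro j v hv
    rw [mul_comm j, ← nsmul_eq_mul, AddChar.map_nsmul_eq_pow]
    induction k with
    | zero => simp
    | succ k ih =>
      rw [pow_succ', Module.End.mul_apply, ih, map_smul, Module.End.mem_eigenspace_iff.mp hv,
        smul_smul, pow_succ]
  have hmaps : ∀ j : ZMod n, Set.MapsTo (f ^ k) (f.eigenspace (stdAddChar j))
      (f.eigenspace (stdAddChar j)) := fun j v hv => by
    rw [SetLike.mem_coe, hpow j v hv]
    exact Submodule.smul_mem _ _ hv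
  rw [LinearMap.trace_eq_sum_trace_restrict (isInternal_eigenspace_stdAddChar hf) hmaps]
  refine sum_congr rfl fun j _ => ?_
  have hrestrict : (f ^ k).restrict (hmaps j) = stdAddChar (j * (k : ZMod n)) • 1 :=
    LinearMap.ext fun v => Subtype.ext (hpow j v v.2)
  rw [hrestrict, map_smul, LinearMap.trace_one, smul_eq_mul, mul_comm, eigenMult]

theorem sum_eigenMult (hf : f ^ n = 1) : ∑ j : ZMod n, eigenMult f j = finrank ℂ V := by
  have h := trace_pow_eq_sum_eigenMult hf 0
  simp only [pow_zero, LinearMap.trace_one, Nat.cast_zero, mul_zero, AddChar.map_zero_eq_one,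
    mul_one] at h
  exact_mod_cast h.symm

theorem card_mul_eigenMult (hf : f ^ n = 1) (j : ZMod n) :
    n * (eigenMult f j : ℂ) =
      ∑ i : ZMod n, LinearMap.trace ℂ V (f ^ i.val) * stdAddChar (-(j * i)) := by
  simp only [trace_pow_eq_sum_eigenMult hf, ZMod.natCast_zmod_val, sum_mul]
  rw [sum_comm]
  simp only [mul_assoc, ← AddChar.map_add_eq_mul, ← sub_eq_add_neg, ← sub_mul, ← mul_sum,
    sum_stdAddChar_mul, sub_eq_zero]
  simp [mul_comm]

theorem eq_smul_of_eigenMult_eq_zero (hf : f ^ n = 1) (j : ZMod n)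
    (h : ∀ i ≠ j, eigenMult f i = 0) : f = stdAddChar j • 1 := by
  have hj : eigenMult f j = finrank ℂ V := by
    rw [← sum_eigenMult (n := n) hf, sum_eq_single j (fun i _ hi => h i hi) (by simp)]
  ext v
  exact Module.End.mem_eigenspace_iff.mp
    ((Submodule.eq_top_of_finrank_eq hj).symm ▸ Submodule.mem_top : v ∈ f.eigenspace (stdAddChar j))

end EigenMult

section Constituents

open ZMod (stdAddChar)

variable {G H V W : Type*} [Group G] [Group H] [AddCommGroup V] [Module ℂ V]
  [FiniteDimensional ℂ V] [AddCommGroup W] [Module ℂ W] {n : ℕ} [NeZero n]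

theorem card_mul_eigenMult_eq_sum_character (ρ : Representation ℂ G V) {y : G} (hy : y ^ n = 1)
    (j : ZMod n) : n * (eigenMult (ρ y) j : ℂ) =
      ∑ i : ZMod n, ρ.character (y ^ i.val) * stdAddChar (-(j * i)) := by
  simp only [card_mul_eigenMult (show ρ y ^ n = 1 by rw [← map_pow, hy, map_one]), character,
    map_pow]

theorem eigenMult_smul_one_of_ne {i j : ZMod n} (h : i ≠ j) :
    eigenMult (stdAddChar i • (1 : Module.End ℂ V)) j = 0 := by
  refine Submodule.finrank_eq_zero.mpr (eq_bot_iff.mpr fun v hv => ?_)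
  have hv' : stdAddChar i • v = stdAddChar j • v := Module.End.mem_eigenspace_iff.mp hv
  by_contra hv0
  exact h (ZMod.injective_stdAddChar (smul_left_injective ℂ hv0 hv'))

theorem mult_eq_zero_of_eigenMult_eq_zero {ρ : Representation ℂ H V} {σ : Representation ℂ H W}
    {c : H} {j : ZMod n} (hσ : σ c = stdAddChar j • 1) (hρ : eigenMult (ρ c) j = 0) :
    mult ρ σ = 0 := by
  have hbot : Module.End.eigenspace (ρ c) (stdAddChar j) = ⊥ := Submodule.finrank_eq_zero.mp hρ
  have hsub : Subsingleton (IntertwiningMap σ ρ) := by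
    refine subsingleton_of_forall_eq 0 fun f => IntertwiningMap.ext <| LinearMap.ext fun v => ?_
    have hv : f v ∈ Module.End.eigenspace (ρ c) (stdAddChar j) := by
      rw [Module.End.mem_eigenspace_iff, ← f.isIntertwining, hσ]
      exact map_smul f _ v
    rwa [hbot, Submodule.mem_bot] at hv
  exact finrank_zero_of_subsingleton

theorem mult_eq_zero_of_eq_smul {ρ : Representation ℂ H V} {σ : Representation ℂ H W} {c : H}
    {i j : ZMod n} (hρ : ρ c = stdAddChar i • 1) (hσ : σ c = stdAddChar j • 1) (h : i ≠ j) :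
    mult ρ σ = 0 :=
  mult_eq_zero_of_eigenMult_eq_zero hσ (hρ ▸ eigenMult_smul_one_of_ne h)

variable [Finite H] [FiniteDimensional ℂ W]

theorem mult_comm (ρ : Representation ℂ H V) (σ : Representation ℂ H W) : mult ρ σ = mult σ ρ := by
  have h : (Nat.card H : ℂ) * mult ρ σ = Nat.card H * mult σ ρ := by
    rw [card_mul_mult, card_mul_mult, ← Equiv.sum_comp (Equiv.inv H)]
    simp [mul_comm]
  exact_mod_cast mul_left_cancel₀ (cast_natCard_ne_zero H) h

variable [Finite G]

theorem mult_comp_eq_sum_mult (ρ : Representation ℂ G V) (f : H →* G) (σ : Representation ℂ H W) :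
    mult (ρ.comp f) σ = ∑ X : Irr G, mult ρ X.rep * mult (X.rep.comp f) σ := by
  have h : (Nat.card H : ℂ) * mult (ρ.comp f) σ =
      Nat.card H * ∑ X : Irr G, (mult ρ X.rep * mult (X.rep.comp f) σ : ℂ) := by
    simp only [mul_sum, mul_left_comm (Nat.card H : ℂ), card_mul_mult (_ : Representation ℂ H _)]
    rw [sum_comm]
    refine sum_congr rfl fun h _ => ?_
    change ρ.character (f h) * _ = _
    rw [Irr.character_eq_sum_mult, sum_mul]
    exact sum_congr rfl fun X _ => mul_assoc _ _ _
  exact_mod_cast mul_left_cancel₀ (cast_natCard_ne_zero H) h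

theorem eigenMult_eq_sum_mult (ρ : Representation ℂ G V) {y : G} (hy : y ^ n = 1) (j : ZMod n) :
    eigenMult (ρ y) j = ∑ X : Irr G, mult ρ X.rep * eigenMult (X.rep y) j := by
  have h : (n : ℂ) * eigenMult (ρ y) j =
      n * ∑ X : Irr G, (mult ρ X.rep * eigenMult (X.rep y) j : ℂ) := by
    simp only [mul_sum, mul_left_comm (n : ℂ), card_mul_eigenMult_eq_sum_character _ hy]
    rw [sum_comm]
    simp only [Irr.character_eq_sum_mult ρ, sum_mul, mul_assoc]
  exact_mod_cast mul_left_cancel₀ (Nat.cast_ne_zero.mpr (NeZero.ne n)) h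

end Constituents

/-! ### Special classes -/

section SpecialClasses

variable {G V W W' : Type*} [Group G] [Finite G] {H : Subgroup G}
  [AddCommGroup V] [Module ℂ V] [FiniteDimensional ℂ V]
  [AddCommGroup W] [Module ℂ W] [AddCommGroup W'] [Module ℂ W']

theorem card_mul_sum_mult_mul_degree (σ : Representation ℂ H V) :
    Nat.card H * ∑ X : Irr G, mult (X.rep.comp H.subtype) σ * X.degree =
      Nat.card G * finrank ℂ V := by
  classical
  have hsum : ∀ h : H, ∑ X : Irr G, X.rep.character h * X.degree =
      if h = 1 then (Nat.card G : ℂ) else 0 := by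
    intro h
    have hcol := Irr.sum_irr_character_mul_character_inv (h : G) 1
    simp only [inv_one, Irr.character_rep_one, mul_one, mul_eq_right,
      OneMemClass.coe_eq_one] at hcol
    rw [hcol]
    split_ifs with h1 <;> simp [h1]
  have key : (Nat.card H : ℂ) * ∑ X : Irr G, (mult (X.rep.comp H.subtype) σ * X.degree : ℂ) =
      Nat.card G * finrank ℂ V := by
    simp only [mul_sum, ← mul_assoc, card_mul_mult, sum_mul]
    rw [sum_comm]
    change ∑ h : H, ∑ X : Irr G, X.rep.character h * _ * _ = _
    simp only [mul_right_comm _ (σ.character _), ← sum_mul, hsum]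
    simp
  exact_mod_cast key

theorem sum_irr_sum_mul_sum [Fintype G] [Fintype H] [DecidableEq G] (α β : H → ℂ) :
    ∑ X : Irr G, (∑ h : H, X.rep.character h * α h⁻¹) * ∑ k : H, β k * X.rep.character (k : G)⁻¹ =
      ∑ g : G, ∑ k : H, ∑ h : H, if h * g = g * (k : G) then β k * α h⁻¹ else 0 := by
  calc ∑ X : Irr G, (∑ h : H, X.rep.character h * α h⁻¹) * ∑ k : H, β k * X.rep.character (k : G)⁻¹
      = ∑ k : H, ∑ h : H, β k * α h⁻¹ *
          ∑ X : Irr G, X.rep.character h * X.rep.character (k : G)⁻¹ := by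
        simp only [sum_mul_sum]
        simp only [mul_sum]
        rw [sum_comm_cycle]
        refine sum_congr rfl fun k _ => sum_comm.trans ?_
        exact sum_congr rfl fun h _ => sum_congr rfl fun X _ => by ring
    _ = ∑ k : H, ∑ h : H, ∑ g : G, if h * g = g * (k : G) then β k * α h⁻¹ else 0 := by
        refine sum_congr rfl fun k _ => sum_congr rfl fun h _ => ?_
        rw [Irr.sum_irr_character_mul_character_inv, Nat.card_eq_fintype_card,
          Fintype.card_subtype, ← sum_filter, sum_const, nsmul_eq_mul, mul_comm]
    _ = _ := by rw [sum_comm_cycle]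

theorem sum_irr_sum_mul_sum_of_special [Fintype H] [Fintype (Subgroup.normalizer (H : Set G))]
    (α β : H → ℂ)
    (hβ : ∀ k, β k ≠ 0 → ∀ g : G, g * k * g⁻¹ ∈ H → g ∈ Subgroup.normalizer (H : Set G)) :
    ∑ X : Irr G, (∑ h : H, X.rep.character h * α h⁻¹) * ∑ k : H, β k * X.rep.character (k : G)⁻¹ =
      ∑ g : Subgroup.normalizer (H : Set G), ∑ k, β k * α (H.normalizerMonoidHom g k⁻¹) := by
  classical
  rw [sum_irr_sum_mul_sum]
  refine (Fintype.sum_of_injective Subtype.val Subtype.val_injective _ _ ?_ ?_).symm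
  · rintro g hg
    refine sum_eq_zero fun k _ => sum_eq_zero fun h _ => ite_eq_right_iff.mpr fun hgk => ?_
    have hβk : β k = 0 := by
      by_contra h0
      refine hg ⟨⟨g, hβ k h0 g ?_⟩, rfl⟩
      rw [← hgk, mul_inv_cancel_right]
      exact h.2
    rw [hβk, zero_mul]
  · rintro ⟨g, hg⟩
    refine sum_congr rfl fun k _ => ?_
    have hiff : ∀ h : H, h * g = g * (k : G) ↔ h = H.normalizerMonoidHom ⟨g, hg⟩ k := by
      intro h
      rw [← Subtype.coe_inj, ← eq_mul_inv_iff_mul_eq]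
      rfl
    simp [hiff]

/-- The conjugate of a representation of `H` by an element of the normalizer of `H`. -/
def conjRep (σ : Representation ℂ H V) (g : Subgroup.normalizer (H : Set G)) :
    Representation ℂ H V :=
  σ.comp (H.normalizerMonoidHom g).toMonoidHom

theorem mult_conjRep_self (σ : Representation ℂ H V) (g : Subgroup.normalizer (H : Set G))
    (hg : (g : G) ∈ H) : mult σ (conjRep σ g) = mult σ σ := by
  have h : (Nat.card H : ℂ) * mult σ (conjRep σ g) = Nat.card H * mult σ σ := by
    rw [card_mul_mult, card_mul_mult]
    refine sum_congr rfl fun h _ => congrArg (σ.character h * ·) ?_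
    exact σ.char_conj h⁻¹ ⟨g, hg⟩
  exact_mod_cast mul_left_cancel₀ (cast_natCard_ne_zero H) h

/-- The multiplicity of the virtual representation `σ - τ` in `ρ`. -/
noncomputable def multSub (ρ : Representation ℂ H V) (σ : Representation ℂ H W)
    (τ : Representation ℂ H W') : ℤ := mult ρ σ - mult ρ τ

/-- The sum over the normalizer of `H` of the multiplicities in `τ` of the conjugates of `σ`. -/
noncomputable def normalizerPairing (σ : Representation ℂ H V) (τ : Representation ℂ H W) : ℤ :=
  ∑ g, (mult τ (conjRep σ g) : ℤ)

theorem card_mul_normalizerPairing [FiniteDimensional ℂ W] (σ : Representation ℂ H V)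
    (τ : Representation ℂ H W) : (Nat.card H : ℂ) * normalizerPairing σ τ =
      ∑ g, ∑ k, τ.character k * σ.character (H.normalizerMonoidHom g k⁻¹) := by
  simp only [normalizerPairing, Int.cast_sum, Int.cast_natCast, mul_sum, card_mul_mult]
  rfl

theorem card_mul_sum_multSub_mul_multSub {V' : Type*} [AddCommGroup V'] [Module ℂ V']
    [FiniteDimensional ℂ V'] [FiniteDimensional ℂ W] [FiniteDimensional ℂ W']
    (σ : Representation ℂ H V) (σ' : Representation ℂ H V')
    (τ : Representation ℂ H W) (τ' : Representation ℂ H W')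
    (hτ : ∀ k, τ.character k ≠ τ'.character k →
      ∀ g : G, g * k * g⁻¹ ∈ H → g ∈ Subgroup.normalizer (H : Set G)) :
    Nat.card H * ∑ X : Irr G, multSub (X.rep.comp H.subtype) σ σ' *
        multSub (X.rep.comp H.subtype) τ τ' =
      normalizerPairing σ τ - normalizerPairing σ' τ -
        (normalizerPairing σ τ' - normalizerPairing σ' τ') := by
  have hσX : ∀ X : Irr G, (Nat.card H : ℂ) * multSub (X.rep.comp H.subtype) σ σ' =
      ∑ h : H, X.rep.character h * (σ.character h⁻¹ - σ'.character h⁻¹) := by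
    intro X
    simp only [multSub, Int.cast_sub, Int.cast_natCast, mul_sub, card_mul_mult, sum_sub_distrib]
    rfl
  have hτX : ∀ X : Irr G, (Nat.card H : ℂ) * multSub (X.rep.comp H.subtype) τ τ' =
      ∑ h : H, (τ.character h - τ'.character h) * X.rep.character (h : G)⁻¹ := by
    intro X
    simp only [multSub, mult_comm (X.rep.comp H.subtype), Int.cast_sub, Int.cast_natCast, mul_sub,
      card_mul_mult, sub_mul, sum_sub_distrib]
    rfl
  have key := sum_irr_sum_mul_sum_of_special (fun h => σ.character h - σ'.character h)
    (fun h => τ.character h - τ'.character h) (fun k hk => hτ k (sub_ne_zero.mp hk))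
  simp only [← hσX, ← hτX] at key
  refine Int.cast_injective (α := ℂ) (mul_left_cancel₀ (cast_natCard_ne_zero H) ?_)
  push_cast at key ⊢
  simp only [mul_sub, card_mul_normalizerPairing, ← sum_sub_distrib]
  refine Eq.trans ?_ (key.trans (sum_congr rfl fun g _ => sum_congr rfl fun k _ => ?_))
  · simp only [mul_sum]
    exact sum_congr rfl fun X _ => by ring
  · ring

end SpecialClasses

/-! ### Centralizers that split -/

theorem normalizer_zpowers_le {G : Type*} [Group G] (y : G) :
    Subgroup.normalizer (Subgroup.zpowers y : Set G) ≤
      Subgroup.normalizer (Subgroup.centralizer {y} : Set G) := by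
  rw [Subgroup.le_normalizer_iff]
  intro g hg c hc
  obtain ⟨k, hk⟩ := (Subgroup.mem_normalizer_iff''.mp hg y).mp (Subgroup.mem_zpowers y)
  have hy : y = g * y ^ k * g⁻¹ := by
    simp only at hk
    rw [hk]; group
  have hcy : Commute c y := Subgroup.mem_centralizer_singleton_iff.mp hc
  rw [Subgroup.mem_centralizer_singleton_iff]
  change Commute _ _
  rw [hy]
  exact SemiconjBy.conj_iff.mpr (hcy.zpow_right k)

/-- A decomposition `C(y) = ⟨y⟩ × K` with `y ^ n = 1` and `|K|` prime to `n`, encoded by the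
projection `C(y) → ⟨y⟩ ≃ ZMod n`, whose kernel is `K`. -/
structure CentralizerSplitting {G : Type*} [Group G] (y : G) (n : ℕ) where
  proj : Subgroup.centralizer {y} →* Multiplicative (ZMod n)
  pow_eq_one : y ^ n = 1
  proj_self : proj ⟨y, Subgroup.mem_centralizer_singleton_iff.mpr rfl⟩ = .ofAdd 1
  coprime : n.Coprime (Nat.card proj.ker)

namespace CentralizerSplitting

variable {G : Type*} [Group G] {y : G} {n : ℕ} (S : CentralizerSplitting y n)

/-- `y` as an element of its centralizer. -/
def self (_ : CentralizerSplitting y n) : Subgroup.centralizer {y} :=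
  ⟨y, Subgroup.mem_centralizer_singleton_iff.mpr rfl⟩

/-- The exponent `i` of the component `y ^ i` of an element of `C(y) = ⟨y⟩ × K`. -/
def exponent (c : Subgroup.centralizer {y}) : ZMod n := (S.proj c).toAdd

@[simp]
theorem exponent_self : S.exponent S.self = 1 := congrArg Multiplicative.toAdd S.proj_self

theorem exponent_one : S.exponent 1 = 0 := congrArg Multiplicative.toAdd (map_one S.proj)

theorem exponent_mul (c d : Subgroup.centralizer {y}) :
    S.exponent (c * d) = S.exponent c + S.exponent d :=
  congrArg Multiplicative.toAdd (map_mul S.proj c d)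

theorem exponent_pow (c : Subgroup.centralizer {y}) (k : ℕ) :
    S.exponent (c ^ k) = k * S.exponent c := by
  rw [← nsmul_eq_mul]
  exact congrArg Multiplicative.toAdd (map_pow S.proj c k)

theorem self_pow_eq_one : S.self ^ n = 1 := Subtype.ext S.pow_eq_one

theorem exponent_inv (c : Subgroup.centralizer {y}) : S.exponent c⁻¹ = -S.exponent c :=
  congrArg Multiplicative.toAdd (map_inv S.proj c)

variable [NeZero n]

theorem exists_pow_eq_pow_exponent :
    ∃ M : ℕ, ∀ c : Subgroup.centralizer {y}, c ^ M = S.self ^ (S.exponent c).val := by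
  obtain ⟨M, hM1, hM0⟩ := Nat.chineseRemainder S.coprime 1 0
  have hself : ∀ k : ℕ, (S.self ^ k) ^ M = S.self ^ k := by
    intro k
    rw [← pow_mul, pow_eq_pow_iff_modEq]
    have h := (hM1.mul_left k).of_dvd (orderOf_dvd_of_pow_eq_one S.self_pow_eq_one)
    rwa [mul_one] at h
  refine ⟨M, fun c => ?_⟩
  set k := (S.self ^ (S.exponent c).val)⁻¹ * c with hk
  have hkker : k ∈ S.proj.ker := by
    refine MonoidHom.mem_ker.mpr (Multiplicative.toAdd.injective ?_)
    change S.exponent k = 0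
    rw [hk, exponent_mul, exponent_inv, exponent_pow, exponent_self]
    simp
  have hkM : k ^ M = 1 := by
    obtain ⟨d, rfl⟩ := (Nat.modEq_zero_iff_dvd.mp hM0)
    have h : (⟨k, hkker⟩ : S.proj.ker) ^ Nat.card S.proj.ker = 1 := pow_card_eq_one'
    rw [pow_mul, show k ^ Nat.card S.proj.ker = 1 from congrArg Subtype.val h, one_pow]
  have hcomm : Commute S.self k :=
    Subtype.ext (Subgroup.mem_centralizer_singleton_iff.mp k.2).symm
  calc c ^ M = (S.self ^ (S.exponent c).val * k) ^ M := by rw [hk, mul_inv_cancel_left]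
    _ = S.self ^ (S.exponent c).val := by rw [(hcomm.pow_left _).mul_pow, hself, hkM, mul_one]

theorem conj_pow_exponent {g : G} {c d : Subgroup.centralizer {y}} (h : g * c * g⁻¹ = d) :
    g * y ^ (S.exponent c).val * g⁻¹ = y ^ (S.exponent d).val := by
  obtain ⟨M, hM⟩ := S.exists_pow_eq_pow_exponent
  have hc := congrArg Subtype.val (hM c)
  have hd := congrArg Subtype.val (hM d)
  simp only [Subgroup.coe_pow] at hc hd
  change _ = y ^ _ at hc
  change _ = y ^ _ at hd
  rw [← hc, ← hd, ← h, conj_pow]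

theorem mem_normalizer_of_isUnit_exponent [Finite G] {g : G} {c : Subgroup.centralizer {y}}
    (hc : IsUnit (S.exponent c)) (hg : g * c * g⁻¹ ∈ Subgroup.centralizer {y}) :
    g ∈ Subgroup.normalizer (Subgroup.centralizer {y} : Set G) := by
  obtain ⟨v, hv⟩ := hc.exists_right_inv
  have hconj : g * y * g⁻¹ ∈ Subgroup.zpowers y := by
    have hy : y = (y ^ (S.exponent c).val) ^ v.val := by
      have h : S.self = (S.self ^ (S.exponent c).val) ^ v.val := by
        rw [← pow_mul]
        nth_rw 1 [← pow_one S.self]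
        rw [pow_eq_pow_iff_modEq]
        refine Nat.ModEq.of_dvd (orderOf_dvd_of_pow_eq_one S.self_pow_eq_one)
          ((ZMod.natCast_eq_natCast_iff _ _ _).mp ?_)
        simp [hv]
      exact congrArg Subtype.val h
    have hgy : g * y * g⁻¹ = (g * y ^ (S.exponent c).val * g⁻¹) ^ v.val := by
      rw [conj_pow, ← hy]
    rw [hgy, S.conj_pow_exponent (d := ⟨_, hg⟩) rfl]
    exact pow_mem (pow_mem (Subgroup.mem_zpowers y) _) _
  refine normalizer_zpowers_le y (Subgroup.mem_normalizer_fintype ?_)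
  rintro _ ⟨k, rfl⟩
  change g * y ^ k * g⁻¹ ∈ Subgroup.zpowers y
  rw [← conj_zpow]
  exact zpow_mem hconj k

open ZMod (stdAddChar)

theorem exponent_normalizerMonoidHom (g : Subgroup.normalizer (Subgroup.centralizer {y} : Set G))
    (c : Subgroup.centralizer {y}) :
    S.exponent ((Subgroup.centralizer {y}).normalizerMonoidHom g c) =
      S.exponent ((Subgroup.centralizer {y}).normalizerMonoidHom g S.self) * S.exponent c := by
  have h : (Subgroup.centralizer {y}).normalizerMonoidHom g S.self ^ (S.exponent c).val =
      S.self ^ (S.exponent ((Subgroup.centralizer {y}).normalizerMonoidHom g c)).val := by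
    rw [← map_pow]
    exact Subtype.ext (S.conj_pow_exponent rfl)
  have hexp := congrArg S.exponent h
  simp only [exponent_pow, exponent_self, ZMod.natCast_zmod_val, mul_one] at hexp
  rw [← hexp, mul_comm]

/-- The action of `N(C(y))` on `⟨y⟩`: an element `g` is sent to `u` with `g * y * g⁻¹ = y ^ u`. -/
def multiplier : Subgroup.normalizer (Subgroup.centralizer {y} : Set G) →* ZMod n where
  toFun g := S.exponent ((Subgroup.centralizer {y}).normalizerMonoidHom g S.self)
  map_one' := by rw [map_one, MulAut.one_apply, exponent_self]
  map_mul' g h := by rw [map_mul, MulAut.mul_apply, exponent_normalizerMonoidHom]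

/-- The group of all `u` such that `y ^ u` is conjugate to `y` under `N(C(y))`. -/
def fusion : Subgroup (ZMod n)ˣ := S.multiplier.toHomUnits.range

section

variable (g : Subgroup.normalizer (Subgroup.centralizer {y} : Set G))

theorem conj_eq_pow_multiplier : (g : G) * y * (g : G)⁻¹ = y ^ (S.multiplier g).val := by
  have h := S.conj_pow_exponent (g := g) (c := S.self)
    (d := (Subgroup.centralizer {y}).normalizerMonoidHom g S.self) rfl
  rcases eq_or_ne n 1 with rfl | hn
  · have hy : y = 1 := (pow_one y).symm.trans S.pow_eq_one
    simp [hy]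
  · have := Fact.mk ((Nat.one_lt_iff_ne_zero_and_ne_one.mpr ⟨NeZero.ne n, hn⟩))
    rwa [exponent_self, ZMod.val_one, pow_one] at h

theorem multiplier_eq_one_iff : S.multiplier g = 1 ↔ (g : G) ∈ Subgroup.centralizer {y} := by
  rw [Subgroup.mem_centralizer_singleton_iff, ← mul_inv_eq_iff_eq_mul]
  refine ⟨fun h => ?_, fun h => ?_⟩
  · have h1 := S.conj_eq_pow_multiplier g
    rw [h] at h1
    have h2 : y ^ (1 : ZMod n).val = y ^ 1 := by
      refine pow_eq_pow_iff_modEq.mpr (Nat.ModEq.of_dvd (orderOf_dvd_of_pow_eq_one S.pow_eq_one)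
        ((ZMod.natCast_eq_natCast_iff _ _ _).mp ?_))
      simp
    rwa [h2, pow_one] at h1
  · have hself : (Subgroup.centralizer {y}).normalizerMonoidHom g S.self = S.self := Subtype.ext h
    exact (congrArg S.exponent hself).trans S.exponent_self

theorem card_normalizer_eq :
    Nat.card (Subgroup.normalizer (Subgroup.centralizer {y} : Set G)) =
      Nat.card S.fusion * Nat.card (Subgroup.centralizer {y}) := by
  have hker : S.multiplier.toHomUnits.ker = (Subgroup.centralizer {y}).subgroupOf
      (Subgroup.normalizer (Subgroup.centralizer {y} : Set G)) := by
    ext g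
    rw [MonoidHom.mem_ker, Units.ext_iff]
    exact S.multiplier_eq_one_iff g
  rw [← S.multiplier.toHomUnits.ker.index_mul_card, Subgroup.index_ker, hker,
    Nat.card_congr (Subgroup.subgroupOfEquivOfLe Subgroup.le_normalizer).toEquiv]
  rfl

theorem multiplier_mul_mem_orbit (j : ZMod n) :
    S.multiplier g * j ∈ MulAction.orbit S.fusion j :=
  ⟨⟨S.multiplier.toHomUnits g, g, rfl⟩, rfl⟩

theorem multiplier_eq_one_of_mul_eq {j : ZMod n} (hj : MulAction.stabilizer S.fusion j = ⊥)
    (h : S.multiplier g * j = j) : S.multiplier g = 1 := by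
  let u : S.fusion := ⟨S.multiplier.toHomUnits g, g, rfl⟩
  have hu : u ∈ MulAction.stabilizer S.fusion j := h
  rw [hj, Subgroup.mem_bot] at hu
  exact congrArg (fun v : S.fusion => ((v : (ZMod n)ˣ) : ZMod n)) hu

theorem conjRep_self {V : Type*} [AddCommGroup V] [Module ℂ V]
    {σ : Representation ℂ (Subgroup.centralizer {y}) V}
    {j : ZMod n} (hσ : σ S.self = stdAddChar j • 1) :
    conjRep σ g S.self = stdAddChar (S.multiplier g * j) • 1 := by
  have h : (Subgroup.centralizer {y}).normalizerMonoidHom g S.self =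
      S.self ^ (S.multiplier g).val :=
    Subtype.ext (S.conj_eq_pow_multiplier g)
  change σ ((Subgroup.centralizer {y}).normalizerMonoidHom g S.self) = _
  rw [h, map_pow, hσ, smul_pow, one_pow, ← AddChar.map_nsmul_eq_pow, nsmul_eq_mul,
    ZMod.natCast_zmod_val]

theorem eigenMult_le_eigenMult_multiplier_mul {V : Type*} [AddCommGroup V] [Module ℂ V]
    [FiniteDimensional ℂ V] (ρ : Representation ℂ G V) (j : ZMod n) :
    eigenMult (ρ y) j ≤ eigenMult (ρ y) (S.multiplier g * j) := by
  have hmem : ∀ v ∈ Module.End.eigenspace (ρ y) (stdAddChar j),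
      ρ (g : G)⁻¹ v ∈ Module.End.eigenspace (ρ y) (stdAddChar (S.multiplier g * j)) := by
    intro v hv
    have hpow : ρ (y ^ (S.multiplier g).val) v = stdAddChar (S.multiplier g * j) • v := by
      rcases eq_or_ne v 0 with rfl | hv0
      · simp
      · rw [map_pow, Module.End.HasEigenvector.pow_apply ⟨hv, hv0⟩, ← AddChar.map_nsmul_eq_pow,
          nsmul_eq_mul, ZMod.natCast_zmod_val]
    rw [Module.End.mem_eigenspace_iff, ← map_smul, ← hpow, ← S.conj_eq_pow_multiplier]
    simp only [← Module.End.mul_apply, ← map_mul]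
    congr 2
    group
  refine LinearMap.finrank_le_finrank_of_injective (f := (ρ (g : G)⁻¹).restrict hmem) ?_
  exact fun v w h => Subtype.ext (Representation.apply_bijective ρ (g : G)⁻¹ |>.1
    (congrArg Subtype.val h))

end

theorem eigenMult_smul {V : Type*} [AddCommGroup V] [Module ℂ V] [FiniteDimensional ℂ V]
    (ρ : Representation ℂ G V) (u : S.fusion) (j : ZMod n) :
    eigenMult (ρ y) (u • j) = eigenMult (ρ y) j := by
  have hle : ∀ (v : S.fusion) (i : ZMod n), eigenMult (ρ y) i ≤ eigenMult (ρ y) (v • i) := by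
    rintro ⟨_, g, rfl⟩ i
    exact S.eigenMult_le_eigenMult_multiplier_mul g ρ i
  refine le_antisymm ?_ (hle u j)
  simpa using hle u⁻¹ (u • j)

variable {V W : Type*} [AddCommGroup V] [Module ℂ V] [AddCommGroup W] [Module ℂ W]

/-- The tensor product of a representation of `C(y)` with the linear character
`c ↦ stdAddChar (s * exponent c)`. -/
noncomputable def twist (σ : Representation ℂ (Subgroup.centralizer {y}) V) (s : ZMod n) :
    Representation ℂ (Subgroup.centralizer {y}) V where
  toFun c := (stdAddChar (s * S.exponent c) : ℂ) • σ c
  map_one' := by rw [exponent_one, mul_zero, AddChar.map_zero_eq_one, one_smul, map_one]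
  map_mul' c d := by
    rw [exponent_mul, mul_add, AddChar.map_add_eq_mul, map_mul σ, smul_mul_smul_comm]

theorem twist_self {σ : Representation ℂ (Subgroup.centralizer {y}) V} {j : ZMod n}
    (hσ : σ S.self = stdAddChar j • 1) (s : ZMod n) :
    S.twist σ s S.self = stdAddChar (j + s) • 1 := by
  change (stdAddChar (s * S.exponent S.self) : ℂ) • σ S.self = _
  rw [hσ, exponent_self, mul_one, smul_smul, ← AddChar.map_add_eq_mul, add_comm]

theorem character_twist (σ : Representation ℂ (Subgroup.centralizer {y}) V) (s : ZMod n)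
    (c : Subgroup.centralizer {y}) :
    (S.twist σ s).character c = stdAddChar (s * S.exponent c) * σ.character c :=
  map_smul (LinearMap.trace ℂ V) _ _

variable [Finite G] [FiniteDimensional ℂ W]

theorem mult_twist_twist (σ : Representation ℂ (Subgroup.centralizer {y}) V)
    (τ : Representation ℂ (Subgroup.centralizer {y}) W) (s : ZMod n) [FiniteDimensional ℂ V] :
    mult (S.twist σ s) (S.twist τ s) = mult σ τ := by
  have h : (Nat.card (Subgroup.centralizer {y}) : ℂ) * mult (S.twist σ s) (S.twist τ s) =
      Nat.card (Subgroup.centralizer {y}) * mult σ τ := by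
    rw [card_mul_mult, card_mul_mult]
    refine sum_congr rfl fun c _ => ?_
    rw [character_twist, character_twist, mul_mul_mul_comm, ← AddChar.map_add_eq_mul, exponent_inv]
    simp
  exact_mod_cast mul_left_cancel₀ (cast_natCard_ne_zero _) h

theorem normalizerPairing_eq_zero {σ : Representation ℂ (Subgroup.centralizer {y}) V}
    {τ : Representation ℂ (Subgroup.centralizer {y}) W} {i j : ZMod n}
    (hσ : σ S.self = stdAddChar i • 1) (hτ : τ S.self = stdAddChar j • 1)
    (h : j ∉ MulAction.orbit S.fusion i) : normalizerPairing σ τ = 0 := by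
  refine sum_eq_zero fun g _ => ?_
  rw [mult_eq_zero_of_eq_smul hτ (S.conjRep_self g hσ)
    (fun hj => h (hj ▸ S.multiplier_mul_mem_orbit g i)), Nat.cast_zero]

theorem normalizerPairing_self {σ : Representation ℂ (Subgroup.centralizer {y}) W} {j : ZMod n}
    (hσ : σ S.self = stdAddChar j • 1) (hσσ : mult σ σ = 1)
    (hj : MulAction.stabilizer S.fusion j = ⊥) :
    normalizerPairing σ σ = Nat.card (Subgroup.centralizer {y}) := by
  have (g : Subgroup.normalizer (Subgroup.centralizer {y} : Set G)) :
      Decidable ((g : G) ∈ Subgroup.centralizer {y}) := Classical.dec _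
  have hterm : ∀ g : Subgroup.normalizer (Subgroup.centralizer {y} : Set G),
      (mult σ (conjRep σ g) : ℤ) = if (g : G) ∈ Subgroup.centralizer {y} then 1 else 0 := by
    intro g
    split_ifs with hg
    · rw [mult_conjRep_self σ g hg, hσσ, Nat.cast_one]
    · rw [mult_eq_zero_of_eq_smul hσ (S.conjRep_self g hσ) fun h => hg ?_, Nat.cast_zero]
      exact (S.multiplier_eq_one_iff g).mp (S.multiplier_eq_one_of_mul_eq g hj h.symm)
  rw [normalizerPairing, sum_congr rfl fun g _ => hterm g, sum_boole,
    ← Fintype.card_subtype, ← Nat.card_eq_fintype_card]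
  exact congrArg Nat.cast
    (Nat.card_congr (Subgroup.subgroupOfEquivOfLe Subgroup.le_normalizer).toEquiv)

theorem normalizerPairing_trivial :
    normalizerPairing (Irr.trivial (Subgroup.centralizer {y})).rep
      (Irr.trivial (Subgroup.centralizer {y})).rep =
        Nat.card S.fusion * Nat.card (Subgroup.centralizer {y}) := by
  have hconj : ∀ g, conjRep (Irr.trivial (Subgroup.centralizer {y})).rep g =
      (Irr.trivial (Subgroup.centralizer {y})).rep :=
    fun g => MonoidHom.ext fun c => (Irr.rep_trivial _).trans (Irr.rep_trivial c).symm
  simp only [normalizerPairing, hconj, Irr.mult_rep_rep, if_true]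
  rw [sum_const, card_univ, ← Nat.card_eq_fintype_card, card_normalizer_eq S]
  simp

/-- The multiplicities in the restrictions of the irreducible representations of `G` to `C(y)` of
the virtual representation `σ - σ ⊗ (c ↦ stdAddChar (s * exponent c))`. -/
noncomputable def virtualMult (σ : Representation ℂ (Subgroup.centralizer {y}) V) (s : ZMod n)
    (X : Irr G) : ℤ :=
  multSub (X.rep.comp (Subgroup.centralizer {y}).subtype) σ (S.twist σ s)

theorem card_mul_sum_virtualMult_mul [FiniteDimensional ℂ V]
    (σ : Representation ℂ (Subgroup.centralizer {y}) V)
    (τ : Representation ℂ (Subgroup.centralizer {y}) W) (s : ZMod n) {t : ZMod n}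
    (ht : ∀ i, ¬IsUnit i → t * i = 0) :
    Nat.card (Subgroup.centralizer {y}) * ∑ X, S.virtualMult σ s X * S.virtualMult τ t X =
      normalizerPairing σ τ - normalizerPairing (S.twist σ s) τ -
        (normalizerPairing σ (S.twist τ t) - normalizerPairing (S.twist σ s) (S.twist τ t)) := by
  refine card_mul_sum_multSub_mul_multSub _ _ _ _ fun c hc g hg => ?_
  refine S.mem_normalizer_of_isUnit_exponent (c := c) ?_ hg
  by_contra hi
  exact hc (by rw [character_twist, ht _ hi, AddChar.map_zero_eq_one, one_mul])

variable [FiniteDimensional ℂ V] {σ : Representation ℂ (Subgroup.centralizer {y}) V}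
  {τ : Representation ℂ (Subgroup.centralizer {y}) W} {i j s t : ZMod n}

theorem sum_virtualMult_mul_eq_zero (hσ : σ S.self = stdAddChar i • 1)
    (hτ : τ S.self = stdAddChar j • 1) (ht : ∀ l, ¬IsUnit l → t * l = 0)
    (hij : j ∉ MulAction.orbit S.fusion i) (hisj : j ∉ MulAction.orbit S.fusion (i + s))
    (hijt : j + t ∉ MulAction.orbit S.fusion i)
    (hisjt : j + t ∉ MulAction.orbit S.fusion (i + s)) :
    ∑ X, S.virtualMult σ s X * S.virtualMult τ t X = 0 := by
  have h := S.card_mul_sum_virtualMult_mul σ τ s ht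
  rw [S.normalizerPairing_eq_zero hσ hτ hij,
    S.normalizerPairing_eq_zero (S.twist_self hσ s) hτ hisj,
    S.normalizerPairing_eq_zero hσ (S.twist_self hτ t) hijt,
    S.normalizerPairing_eq_zero (S.twist_self hσ s) (S.twist_self hτ t) hisjt] at h
  exact (mul_eq_zero.mp h).resolve_left (Nat.cast_ne_zero.mpr Nat.card_pos.ne')

theorem sum_virtualMult_mul_eq_one (hσ : σ S.self = stdAddChar j • 1) (hσσ : mult σ σ = 1)
    (hj : MulAction.stabilizer S.fusion j = ⊥) (ht : ∀ l, ¬IsUnit l → t * l = 0)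
    (hjs : j + s ∉ MulAction.orbit S.fusion j) (hjt : j + t ∉ MulAction.orbit S.fusion j)
    (hst : j + t ∉ MulAction.orbit S.fusion (j + s)) :
    ∑ X, S.virtualMult σ s X * S.virtualMult σ t X = 1 := by
  have h := S.card_mul_sum_virtualMult_mul σ σ s ht
  rw [S.normalizerPairing_self hσ hσσ hj,
    S.normalizerPairing_eq_zero (S.twist_self hσ s) hσ
      (fun h => hjs (MulAction.mem_orbit_symm.mp h)),
    S.normalizerPairing_eq_zero hσ (S.twist_self hσ t) hjt,
    S.normalizerPairing_eq_zero (S.twist_self hσ s) (S.twist_self hσ t) hst] at h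
  exact mul_left_cancel₀ (Nat.cast_ne_zero.mpr Nat.card_pos.ne') (h.trans (by ring))

theorem sum_virtualMult_mul_self_eq_two (hσ : σ S.self = stdAddChar j • 1) (hσσ : mult σ σ = 1)
    (hj : MulAction.stabilizer S.fusion j = ⊥)
    (hjs' : MulAction.stabilizer S.fusion (j + s) = ⊥) (hs : ∀ l, ¬IsUnit l → s * l = 0)
    (hjs : j + s ∉ MulAction.orbit S.fusion j) :
    ∑ X, S.virtualMult σ s X * S.virtualMult σ s X = 2 := by
  have h := S.card_mul_sum_virtualMult_mul σ σ s hs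
  rw [S.normalizerPairing_self hσ hσσ hj,
    S.normalizerPairing_eq_zero (S.twist_self hσ s) hσ
      (fun h => hjs (MulAction.mem_orbit_symm.mp h)),
    S.normalizerPairing_eq_zero hσ (S.twist_self hσ s) hjs,
    S.normalizerPairing_self (S.twist_self hσ s) ((S.mult_twist_twist σ σ s).trans hσσ) hjs'] at h
  exact mul_left_cancel₀ (Nat.cast_ne_zero.mpr Nat.card_pos.ne') (h.trans (by ring))

theorem sum_virtualMult_trivial_mul_self
    (hs' : MulAction.stabilizer S.fusion s = ⊥) (hs : ∀ l, ¬IsUnit l → s * l = 0) (hs0 : s ≠ 0) :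
    ∑ X, S.virtualMult (Irr.trivial (Subgroup.centralizer {y})).rep s X *
      S.virtualMult (Irr.trivial (Subgroup.centralizer {y})).rep s X =
        Nat.card S.fusion + 1 := by
  have hself : (Irr.trivial (Subgroup.centralizer {y})).rep S.self =
      (stdAddChar (0 : ZMod n) : ℂ) • 1 := by simp
  have hself_s := S.twist_self hself s
  rw [zero_add] at hself_s
  have h0s : s ∉ MulAction.orbit S.fusion (0 : ZMod n) := by
    rintro ⟨u, rfl⟩
    exact hs0 (smul_zero u)
  have h := S.card_mul_sum_virtualMult_mul (Irr.trivial (Subgroup.centralizer {y})).rep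
    (Irr.trivial (Subgroup.centralizer {y})).rep s hs
  rw [S.normalizerPairing_trivial,
    S.normalizerPairing_eq_zero hself_s hself (fun h => h0s (MulAction.mem_orbit_symm.mp h)),
    S.normalizerPairing_eq_zero hself hself_s h0s,
    S.normalizerPairing_self hself_s
      ((S.mult_twist_twist _ _ s).trans (by rw [Irr.mult_rep_rep, if_pos rfl])) hs'] at h
  exact mul_left_cancel₀ (Nat.cast_ne_zero.mpr Nat.card_pos.ne') (h.trans (by ring))

variable (σ s) in
theorem sum_virtualMult_mul_degree :
    ∑ X, S.virtualMult σ s X * (X.degree : ℤ) = 0 := by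
  have h := (card_mul_sum_mult_mul_degree (G := G) σ).trans
    (card_mul_sum_mult_mul_degree (G := G) (S.twist σ s)).symm
  simp only [virtualMult, multSub, sub_mul, sum_sub_distrib, sub_eq_zero]
  exact_mod_cast Nat.eq_of_mul_eq_mul_left Nat.card_pos h

end CentralizerSplitting

theorem eq_single_sub_single_of_sum_mul_self_eq_two {ι : Type*} [Fintype ι] [DecidableEq ι]
    {u : ι → ℤ} {d : ι → ℕ} (hd : ∀ i, 0 < d i) (hu : ∑ i, u i * u i = 2)
    (hud : ∑ i, u i * (d i : ℤ) = 0) {i : ι} (hi : 0 < u i) :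
    ∃ k ≠ i, u = Pi.single i 1 - Pi.single k 1 := by
  obtain ⟨k, hk⟩ : ∃ k, u k < 0 := by
    by_contra! hc
    refine hud.not_gt
      (sum_pos' (fun l _ => mul_nonneg (hc l) (Nat.cast_nonneg _)) ⟨i, mem_univ i, ?_⟩)
    exact mul_pos hi (Nat.cast_pos.mpr (hd i))
  have hki : k ≠ i := by rintro rfl; omega
  have hsplit : u i * u i + (u k * u k + ∑ l ∈ (univ.erase i).erase k, u l * u l) = 2 := by
    rw [add_sum_erase _ (fun l => u l * u l) (mem_erase.mpr ⟨hki, mem_univ k⟩),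
      add_sum_erase _ (fun l => u l * u l) (mem_univ i), hu]
  have hnonneg : ∀ l ∈ (univ.erase i).erase k, 0 ≤ u l * u l := fun l _ => mul_self_nonneg _
  have hrest := sum_nonneg hnonneg
  have hui : u i = 1 := by nlinarith
  have huk : u k = -1 := by nlinarith
  rw [hui, huk] at hsplit
  have hzero := (sum_eq_zero_iff_of_nonneg hnonneg).mp (by linarith)
  refine ⟨k, hki, funext fun l => ?_⟩
  by_cases hli : l = i
  · subst hli; simp [hui, hki.symm]
  by_cases hlk : l = k
  · subst hlk; simp [huk, hki]
  · simpa [hli, hlk] using hzero l (by simp [hli, hlk])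

namespace CentralizerSplitting

open ZMod (stdAddChar)

variable {G : Type*} [Group G] {y : G} {n : ℕ} (S : CentralizerSplitting y n) [NeZero n] [Finite G]

theorem exists_mult_rep_ne_zero {V : Type*} [AddCommGroup V] [Module ℂ V] [FiniteDimensional ℂ V]
    (ρ : Representation ℂ (Subgroup.centralizer {y}) V) {j : ZMod n}
    (hj : eigenMult (ρ S.self) j ≠ 0) :
    ∃ T : Irr (Subgroup.centralizer {y}), T.rep S.self = stdAddChar j • 1 ∧ mult ρ T.rep ≠ 0 := by
  rw [eigenMult_eq_sum_mult ρ S.self_pow_eq_one] at hj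
  obtain ⟨T, -, hT⟩ := exists_ne_zero_of_sum_ne_zero hj
  obtain ⟨hmult, heigen⟩ := mul_ne_zero_iff.mp hT
  refine ⟨T, ?_, hmult⟩
  obtain ⟨c, hc⟩ := T.exists_eq_smul_of_commute (T.rep S.self) fun g => by
    have hcomm : S.self * g = g * S.self :=
      Subtype.ext (Subgroup.mem_centralizer_singleton_iff.mp g.2).symm
    rw [Commute, SemiconjBy, ← map_mul, hcomm, map_mul]
  have hcn : c ^ n = 1 := by
    have h : T.rep S.self ^ n = 1 := by rw [← map_pow, S.self_pow_eq_one, map_one]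
    rw [hc, smul_pow, one_pow] at h
    exact smul_left_injective ℂ (one_ne_zero (α := Module.End ℂ (Fin T.degree → ℂ)))
      (h.trans (one_smul ℂ _).symm)
  obtain ⟨i, rfl⟩ := exists_stdAddChar_eq_of_pow_eq_one hcn
  obtain rfl : i = j := by
    by_contra hij
    exact heigen (hc ▸ eigenMult_smul_one_of_ne hij)
  exact hc

variable {T : Irr (Subgroup.centralizer {y})} {j m : ZMod n} {ψ : Irr G}

theorem virtualMult_pos_of_eigenMult_eq_zero
    (hT : T.rep S.self = stdAddChar j • 1)
    (hψ : mult (ψ.rep.comp (Subgroup.centralizer {y}).subtype) T.rep ≠ 0)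
    (hm : eigenMult (ψ.rep y) m = 0) : 0 < S.virtualMult T.rep (m - j) ψ := by
  have htwist := S.twist_self hT (m - j)
  rw [add_sub_cancel] at htwist
  have h0 : mult (ψ.rep.comp (Subgroup.centralizer {y}).subtype) (S.twist T.rep (m - j)) = 0 :=
    mult_eq_zero_of_eigenMult_eq_zero htwist hm
  rw [virtualMult, multSub, h0, Nat.cast_zero, sub_zero]
  exact Nat.cast_pos.mpr (Nat.pos_of_ne_zero hψ)

theorem exists_virtualMult_eq_single_sub_single
    (hT : T.rep S.self = stdAddChar j • 1)
    (hψ : 0 < S.virtualMult T.rep (m - j) ψ)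
    (hj : MulAction.stabilizer S.fusion j = ⊥) (hm : MulAction.stabilizer S.fusion m = ⊥)
    (hmj : m ∉ MulAction.orbit S.fusion j) (hs : ∀ l, ¬IsUnit l → (m - j) * l = 0) :
    ∃ X ≠ ψ, S.virtualMult T.rep (m - j) = Pi.single ψ 1 - Pi.single X 1 := by
  rw [← add_sub_cancel j m] at hm hmj
  exact eq_single_sub_single_of_sum_mul_self_eq_two Irr.degree_pos
    (S.sum_virtualMult_mul_self_eq_two hT (by rw [Irr.mult_rep_rep, if_pos rfl]) hj hm hs hmj)
    (S.sum_virtualMult_mul_degree T.rep (m - j)) hψ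

theorem mem_orbit_of_eigenMult_ne_zero {j₁ j₂ m₁ m₂ : ZMod n}
    (hj₁ : eigenMult (ψ.rep y) j₁ ≠ 0) (hm₁ : eigenMult (ψ.rep y) m₁ = 0)
    (hj₂ : eigenMult (ψ.rep y) j₂ ≠ 0) (hm₂ : eigenMult (ψ.rep y) m₂ = 0)
    (hs₁ : ∀ l, ¬IsUnit l → (m₁ - j₁) * l = 0) (hs₂ : ∀ l, ¬IsUnit l → (m₂ - j₂) * l = 0)
    (hfree : ∀ l ∈ ({j₁, m₁, j₂, m₂} : Set (ZMod n)), MulAction.stabilizer S.fusion l = ⊥)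
    (hm : m₂ ∉ MulAction.orbit S.fusion m₁) : j₂ ∈ MulAction.orbit S.fusion j₁ := by
  by_contra hj
  have hnot : ∀ {i m : ZMod n}, eigenMult (ψ.rep y) i ≠ 0 → eigenMult (ψ.rep y) m = 0 →
      m ∉ MulAction.orbit S.fusion i := by
    rintro i _ hi hm ⟨u, rfl⟩
    exact hi ((S.eigenMult_smul ψ.rep u i).symm.trans hm)
  obtain ⟨T₁, hT₁, hψ₁⟩ :=
    S.exists_mult_rep_ne_zero (ψ.rep.comp (Subgroup.centralizer {y}).subtype) hj₁
  obtain ⟨T₂, hT₂, hψ₂⟩ :=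
    S.exists_mult_rep_ne_zero (ψ.rep.comp (Subgroup.centralizer {y}).subtype) hj₂
  obtain ⟨X₁, hX₁, h₁⟩ := S.exists_virtualMult_eq_single_sub_single hT₁
    (S.virtualMult_pos_of_eigenMult_eq_zero hT₁ hψ₁ hm₁) (hfree _ (by simp)) (hfree _ (by simp))
    (hnot hj₁ hm₁) hs₁
  obtain ⟨X₂, hX₂, h₂⟩ := S.exists_virtualMult_eq_single_sub_single hT₂
    (S.virtualMult_pos_of_eigenMult_eq_zero hT₂ hψ₂ hm₂) (hfree _ (by simp)) (hfree _ (by simp))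
    (hnot hj₂ hm₂) hs₂
  have horth := S.sum_virtualMult_mul_eq_zero (s := m₁ - j₁) hT₁ hT₂ hs₂ hj
    (by simpa using fun h => hnot hj₂ hm₁ (MulAction.mem_orbit_symm.mp h))
    (by simpa using hnot hj₁ hm₂) (by simpa using hm)
  rw [h₁, h₂] at horth
  have hX : (1 : ℤ) + (if X₂ = X₁ then 1 else 0) = 0 := by
    simpa [mul_sub, sum_sub_distrib, Pi.single_apply, hX₁.symm, hX₂] using horth
  split_ifs at hX
  all_goals omega

end CentralizerSplitting

/-! ### Faithful representations of small degree -/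

section SmallDegree

variable {G V : Type*} [Group G] [Finite G] [AddCommGroup V] [Module ℂ V] [FiniteDimensional ℂ V]
  {p : ℕ}

theorem Irr.eq_one_of_forall_degree_le {σ : Representation ℂ G V} (hσ : Function.Injective σ)
    {c : G} (hc : ∀ X : Irr G, X.degree ≤ finrank ℂ V → X.rep c = 1) : c = 1 :=
  hσ <| (Irr.eq_one_of_forall_constituent_eq_one σ c fun X hX =>
    hc X (Irr.degree_le_of_mult_ne_zero hX)).trans (map_one σ).symm

-- Schur's lemma makes `c` act as a scalar; its `degree`-th power is a determinant, hence trivial.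
theorem Irr.rep_eq_one_of_mem_center_of_mem_commutator (X : Irr G)
    (hX : X.degree.Coprime (Nat.card G)) {c : G} (hc : c ∈ Subgroup.center G)
    (hc' : c ∈ commutator G) : X.rep c = 1 := by
  have : Nonempty (Fin X.degree) := Fin.pos_iff_nonempty.mp X.degree_pos
  obtain ⟨z, hz⟩ := X.exists_eq_smul_of_commute (X.rep c) fun g =>
    (Commute.map (Subgroup.mem_center_iff.mp hc g).symm X.rep)
  have hdet : z ^ X.degree = 1 := by
    have h : LinearMap.det (X.rep c) = 1 := by
      let δ : G →* ℂˣ := ((LinearMap.det).comp X.rep).toHomUnits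
      exact congrArg Units.val (MonoidHom.mem_ker.mp (Abelianization.commutator_subset_ker δ hc'))
    rw [hz, LinearMap.det_smul, map_one, mul_one, finrank_fin_fun] at h
    exact h
  have hcard : z ^ Nat.card G = 1 := by
    have h : X.rep c ^ Nat.card G = 1 := by rw [← map_pow, pow_card_eq_one', map_one]
    rw [hz, smul_pow, one_pow] at h
    simpa using congrFun (LinearMap.congr_fun h fun _ => 1) (Classical.arbitrary _)
  have hz1 := pow_gcd_eq_one.mpr ⟨hdet, hcard⟩
  rw [hX, pow_one] at hz1
  rw [hz, hz1, one_smul]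

theorem exists_mem_center_ne_one_of_isPGroup [Fact p.Prime] (hG : IsPGroup p G) (N : Subgroup G)
    [N.Normal] (hN : N ≠ ⊥) : ∃ c ∈ N, c ∈ Subgroup.center G ∧ c ≠ 1 := by
  have hdvd : p ∣ Nat.card N := by
    have : Nontrivial N := (Subgroup.nontrivial_iff_ne_bot N).mpr hN
    obtain ⟨k, hk, hcard⟩ := (hG.to_subgroup N).nontrivial_iff_card.mp inferInstance
    exact hcard ▸ dvd_pow_self p hk.ne'
  obtain ⟨c, hc, hc1⟩ := (hG.of_equiv ConjAct.toConjAct)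
    |>.exists_fixed_point_of_prime_dvd_card_of_fixed_point N hdvd (a := 1) fun g => smul_one g
  refine ⟨c, c.2, Subgroup.mem_center_iff.mpr fun g => ?_, fun h => hc1 (Subtype.ext h).symm⟩
  have h : g * c * g⁻¹ = c := congrArg Subtype.val (hc (ConjAct.toConjAct g))
  exact mul_inv_eq_iff_eq_mul.mp h

theorem commute_of_isPGroup_of_finrank_lt [Fact p.Prime] (hG : IsPGroup p G)
    {σ : Representation ℂ G V} (hσ : Function.Injective σ) (hV : finrank ℂ V < p) (x y : G) :
    Commute x y := by
  have hcomm : commutator G = ⊥ := by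
    by_contra hne
    obtain ⟨c, hc', hc, hc1⟩ := exists_mem_center_ne_one_of_isPGroup hG _ hne
    refine hc1 (Irr.eq_one_of_forall_degree_le hσ fun X hX =>
      X.rep_eq_one_of_mem_center_of_mem_commutator ?_ hc hc')
    obtain ⟨k, hk⟩ := IsPGroup.iff_card.mp hG
    exact hk ▸ (Nat.coprime_of_lt_prime X.degree_pos.ne' (hX.trans_lt hV) Fact.out).symm.pow_right k
  exact commutatorElement_eq_one_iff_commute.mp
    (Subgroup.mem_bot.mp (hcomm ▸ Subgroup.commutator_mem_commutator
      (Subgroup.mem_top x) (Subgroup.mem_top y)))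

open ZMod (stdAddChar)

theorem zmod_mul_eq_zero_of_not_isUnit {a : ℕ} [hp : Fact p.Prime] (t : ℕ) {l : ZMod (p ^ (a + 1))}
    (hl : ¬IsUnit l) : ((p ^ a * t : ℕ) : ZMod (p ^ (a + 1))) * l = 0 := by
  obtain ⟨k, hk⟩ : p ∣ l.val := by
    by_contra h
    refine hl ((ZMod.natCast_zmod_val l) ▸ (ZMod.isUnit_iff_coprime _ _).mpr ?_)
    exact ((hp.out.coprime_iff_not_dvd.mpr h).symm).pow_right _
  rw [← ZMod.natCast_zmod_val l, hk, ← Nat.cast_mul, ZMod.natCast_eq_zero_iff]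
  exact ⟨t * k, by ring⟩

theorem exists_eigenMult_eq_zero {a : ℕ} [hp : Fact p.Prime] {f : Module.End ℂ V}
    (hf : f ^ p ^ (a + 1) = 1) (hV : finrank ℂ V < p - 1) (j m₀ : ZMod (p ^ (a + 1))) :
    ∃ m ≠ m₀, (∀ l, ¬IsUnit l → (m - j) * l = 0) ∧ eigenMult f m = 0 := by
  have hpos : ∀ k, 0 < p ^ k := fun k => pow_pos hp.out.pos k
  let φ : Fin p → ZMod (p ^ (a + 1)) := fun t => j + ((p ^ a * t : ℕ) : ZMod (p ^ (a + 1)))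
  have hφ : Function.Injective φ := by
    intro t s h
    have hlt : ∀ t : Fin p, p ^ a * (t : ℕ) < p ^ (a + 1) := fun t => by
      rw [pow_succ]; exact Nat.mul_lt_mul_of_pos_left t.2 (hpos a)
    refine Fin.ext (Nat.eq_of_mul_eq_mul_left (hpos a) ?_)
    exact ((ZMod.natCast_eq_natCast_iff _ _ _).mp (add_left_cancel h)).eq_of_lt_of_lt
      (hlt t) (hlt s)
  by_contra! hne
  have hsum : #((univ.image φ).erase m₀) ≤ finrank ℂ V := by
    rw [← sum_eigenMult hf, card_eq_sum_ones]
    refine (sum_le_sum fun m hm => ?_).trans (sum_le_sum_of_subset (subset_univ _))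
    obtain ⟨hm₀, hm⟩ := mem_erase.mp hm
    obtain ⟨t, -, rfl⟩ := mem_image.mp hm
    refine Nat.one_le_iff_ne_zero.mpr (hne _ hm₀ fun l hl => ?_)
    rw [add_sub_cancel_left]
    exact zmod_mul_eq_zero_of_not_isUnit t hl
  have hcard := pred_card_le_card_erase (s := univ.image φ) (a := m₀)
  rw [card_image_of_injective _ hφ, card_univ, Fintype.card_fin] at hcard
  omega

end SmallDegree

namespace CentralizerSplitting

variable {G : Type*} [Group G] {y : G} {n : ℕ}

theorem nonempty_of_sup_zpowers_eq_top {y' : Subgroup.centralizer {y}} (hy' : (y' : G) = y)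
    (hn : orderOf y = n) (K : Subgroup (Subgroup.centralizer {y})) [K.Normal]
    (hK : n.Coprime (Nat.card K)) (htop : K ⊔ Subgroup.zpowers y' = ⊤) :
    Nonempty (CentralizerSplitting y n) := by
  have hgen : ∀ x : Subgroup.centralizer {y} ⧸ K, x ∈ Subgroup.zpowers (y' : _ ⧸ K) := by
    rintro ⟨c⟩
    obtain ⟨k, hk, _, ⟨i, rfl⟩, rfl⟩ :=
      Subgroup.mem_sup_of_normal_left.mp (htop ▸ Subgroup.mem_top c)
    refine ⟨i, ?_⟩
    change ((y' ^ i : Subgroup.centralizer {y}) : _ ⧸ K) = (k * y' ^ i : Subgroup.centralizer {y})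
    rw [QuotientGroup.mk_mul, (QuotientGroup.eq_one_iff k).mpr hk, one_mul]
  have horder : orderOf (y' : _ ⧸ K) = n := by
    have hn' : orderOf y' = n :=
      (Subgroup.orderOf_coe y').symm.trans ((congrArg orderOf hy').trans hn)
    refine Nat.dvd_antisymm (hn' ▸ orderOf_map_dvd (QuotientGroup.mk' K) y') ?_
    refine hK.dvd_of_dvd_mul_right ?_
    rw [← hn', orderOf_dvd_iff_pow_eq_one, pow_mul]
    have hmem : y' ^ orderOf (y' : _ ⧸ K) ∈ K := by
      rw [← QuotientGroup.eq_one_iff, QuotientGroup.mk_pow, pow_orderOf_eq_one]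
    exact congrArg Subtype.val (pow_card_eq_one' (x := (⟨_, hmem⟩ : K)))
  obtain ⟨e, he⟩ : ∃ e : Multiplicative (ZMod n) ≃* Subgroup.centralizer {y} ⧸ K,
      e (.ofAdd 1) = y' :=
    ⟨zmodMulEquivOfGenerator hgen ((orderOf_eq_card_of_forall_mem_zpowers hgen).symm.trans horder),
      zmodMulEquivOfGenerator_apply_ofAdd_one _ _⟩
  have hker : ((e.symm : _ →* Multiplicative (ZMod n)).comp (QuotientGroup.mk' K)).ker = K := by
    rw [MonoidHom.ker_mulEquiv_comp, QuotientGroup.ker_mk']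
  refine ⟨⟨_, hn ▸ pow_orderOf_eq_one y, ?_, hker.symm ▸ hK⟩⟩
  obtain rfl : y' = ⟨y, Subgroup.mem_centralizer_singleton_iff.mpr rfl⟩ := Subtype.ext hy'
  exact e.symm_apply_eq.mpr he.symm

end CentralizerSplitting

section SmallDegree

variable {G V : Type*} [Group G] [Finite G] [AddCommGroup V] [Module ℂ V] [FiniteDimensional ℂ V]
  {p : ℕ} [hp : Fact p.Prime]

open ZMod (stdAddChar)

theorem CentralizerSplitting.exists_eq_smul_of_fusion_eq_bot {a : ℕ} {y : G}
    (S : CentralizerSplitting y (p ^ (a + 1))) (hS : S.fusion = ⊥) {X : Irr G}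
    (hX : X.degree < p - 1) : ∃ z : ℂ, X.rep y = z • 1 := by
  have hy : X.rep y ^ p ^ (a + 1) = 1 := by rw [← map_pow, S.pow_eq_one, map_one]
  have hdim : finrank ℂ (Fin X.degree → ℂ) = X.degree := finrank_fin_fun ℂ
  have hsub : Subsingleton S.fusion := by rw [hS]; infer_instance
  have horb : ∀ {i j : ZMod (p ^ (a + 1))}, i ∈ MulAction.orbit S.fusion j → i = j := by
    rintro _ j ⟨u, rfl⟩
    rw [Subsingleton.elim u 1]
    exact one_smul _ j
  obtain ⟨j, hj⟩ : ∃ j : ZMod (p ^ (a + 1)), eigenMult (X.rep y) j ≠ 0 := by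
    by_contra! h
    have := sum_eigenMult hy
    simp only [h, sum_const_zero, hdim] at this
    exact X.degree_pos.ne this
  refine ⟨_, eq_smul_of_eigenMult_eq_zero hy j fun i hij => ?_⟩
  by_contra hi
  obtain ⟨m₁, -, hs₁, hm₁⟩ := exists_eigenMult_eq_zero hy (hdim.trans_lt hX) j j
  obtain ⟨m₂, hne, hs₂, hm₂⟩ := exists_eigenMult_eq_zero hy (hdim.trans_lt hX) i m₁
  exact hij (horb (S.mem_orbit_of_eigenMult_ne_zero hj hm₁ hi hm₂ hs₁ hs₂
    (fun _ _ => Subsingleton.elim _ _) fun h => hne (horb h)))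

omit [Finite G] in
theorem exists_centralizerSplitting_fusion_eq_bot {a : ℕ} (R : Subgroup G) [R.Normal]
    (hR : p.Coprime (Nat.card R)) {y : G} (hy : orderOf y = p ^ (a + 1))
    (htop : R ⊔ Subgroup.zpowers y = ⊤) :
    ∃ S : CentralizerSplitting y (p ^ (a + 1)), S.fusion = ⊥ := by
  have hR' : (p ^ (a + 1)).Coprime (Nat.card R) := hR.pow_left _
  let C := Subgroup.centralizer {y}
  let y' : C := ⟨y, Subgroup.mem_centralizer_singleton_iff.mpr rfl⟩
  obtain ⟨S⟩ := CentralizerSplitting.nonempty_of_sup_zpowers_eq_top (y' := y') rfl hy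
    (R.subgroupOf C) (hR'.coprime_dvd_right (Subgroup.card_comap_dvd_of_injective _ _
      C.subtype_injective)) (by
    refine eq_top_iff.mpr fun c _ => ?_
    obtain ⟨r, hr, _, ⟨i, rfl⟩, hc⟩ :=
      Subgroup.mem_sup_of_normal_left.mp (htop ▸ Subgroup.mem_top (c : G))
    refine Subgroup.mem_sup_of_normal_left.mpr ⟨c * (y' ^ i)⁻¹, ?_, y' ^ i, ⟨i, rfl⟩, by simp⟩
    change (c : G) * (y ^ i)⁻¹ ∈ R
    rwa [← hc, mul_inv_cancel_right])
  refine ⟨S, eq_bot_iff.mpr ?_⟩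
  rintro _ ⟨g, rfl⟩
  refine Subgroup.mem_bot.mpr (Units.ext ((S.multiplier_eq_one_iff g).mpr ?_))
  obtain ⟨r, hr, _, ⟨i, rfl⟩, hg⟩ :=
    Subgroup.mem_sup_of_normal_left.mp (htop ▸ Subgroup.mem_top (g : G))
  have hconj : (g : G) * y * (g : G)⁻¹ * y⁻¹ = r * y * r⁻¹ * y⁻¹ := by
    rw [← hg]; group
  have hmem : r * y * r⁻¹ * y⁻¹ ∈ R := by
    simpa only [mul_assoc] using R.mul_mem hr (‹R.Normal›.conj_mem r⁻¹ (R.inv_mem hr) y)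
  have hone : (g : G) * y * (g : G)⁻¹ * y⁻¹ = 1 := by
    have hdisj : Disjoint R (Subgroup.zpowers y) := by
      refine Subgroup.disjoint_of_coprime_natCard ?_
      rw [Nat.card_zpowers, hy]
      exact hR'.symm
    refine Subgroup.disjoint_def.mp hdisj (hconj ▸ hmem) ?_
    rw [S.conj_eq_pow_multiplier]
    exact mul_mem (pow_mem (Subgroup.mem_zpowers y) _) (inv_mem (Subgroup.mem_zpowers y))
  exact Subgroup.mem_centralizer_singleton_iff.mpr
    (mul_inv_eq_iff_eq_mul.mp (mul_inv_eq_one.mp hone))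

theorem commute_of_sup_zpowers_eq_top {σ : Representation ℂ G V} (hσ : Function.Injective σ)
    (hV : finrank ℂ V < p - 1) (R : Subgroup G) [R.Normal] (hR : p.Coprime (Nat.card R)) {y : G}
    {a : ℕ} (hy : orderOf y = p ^ a) (htop : R ⊔ Subgroup.zpowers y = ⊤) (x : G) :
    Commute x y := by
  rcases a with _ | a
  · rw [pow_zero, orderOf_eq_one_iff] at hy
    exact hy ▸ Commute.one_right x
  obtain ⟨S, hS⟩ := exists_centralizerSplitting_fusion_eq_bot R hR hy htop
  rw [← commutatorElement_eq_one_iff_commute]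
  refine Irr.eq_one_of_forall_degree_le hσ fun X hX => ?_
  obtain ⟨z, hz⟩ := S.exists_eq_smul_of_fusion_eq_bot hS (hX.trans_lt hV)
  have hcomm : X.rep (x * y) = X.rep (y * x) := by
    rw [map_mul, map_mul, hz, mul_smul_comm, smul_mul_assoc, mul_one, one_mul]
  rw [commutatorElement_def, mul_assoc, ← mul_inv_rev, map_mul, hcomm, ← map_mul, mul_inv_cancel,
    map_one]

end SmallDegree

/-- A `p`-element of a group: an element of `p`-power order. -/
def IsPElement {G : Type*} [Group G] (p : ℕ) (x : G) : Prop := ∃ k, x ^ p ^ k = 1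

namespace IsPElement

variable {G H : Type*} [Group G] [Group H] {p : ℕ} {x y : G}

protected theorem one : IsPElement p (1 : G) := ⟨0, one_pow _⟩

theorem map (h : IsPElement p x) (f : G →* H) : IsPElement p (f x) :=
  h.imp fun k hk => by rw [← map_pow, hk, map_one]

theorem of_map {f : G →* H} (hf : Function.Injective f) (h : IsPElement p (f x)) :
    IsPElement p x :=
  h.imp fun k hk => hf (by rw [map_pow, hk, map_one])

protected theorem inv (h : IsPElement p x) : IsPElement p x⁻¹ :=
  h.imp fun k hk => by rw [inv_pow, hk, inv_one]

theorem conj (h : IsPElement p x) (g : G) : IsPElement p (g * x * g⁻¹) :=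
  h.map (MulAut.conj g).toMonoidHom

protected theorem mul (hx : IsPElement p x) (hy : IsPElement p y) (hxy : Commute x y) :
    IsPElement p (x * y) := by
  obtain ⟨k, hk⟩ := hx
  obtain ⟨l, hl⟩ := hy
  refine ⟨k + l, ?_⟩
  rw [hxy.mul_pow, pow_add, pow_mul, hk, one_pow, mul_comm, pow_mul, hl, one_pow, one_mul]

theorem isPGroup_zpowers (h : IsPElement p x) : IsPGroup p (Subgroup.zpowers x) := by
  obtain ⟨k, hk⟩ := h
  rintro ⟨_, i, rfl⟩
  refine ⟨k, Subtype.ext ?_⟩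
  change (x ^ i) ^ p ^ k = 1
  rw [← zpow_natCast, zpow_comm, zpow_natCast, hk, one_zpow]

theorem of_mem {P : Subgroup G} (hP : IsPGroup p P) (hx : x ∈ P) : IsPElement p x :=
  (show IsPElement p (⟨x, hx⟩ : P) from hP _).map P.subtype

theorem eq_one_of_pow_eq_one (h : IsPElement p x) {m : ℕ} (hm : p.Coprime m) (hx : x ^ m = 1) :
    x = 1 := by
  obtain ⟨k, hk⟩ := h
  have hgcd := pow_gcd_eq_one.mpr ⟨hx, hk⟩
  rwa [hm.symm.pow_right k, pow_one] at hgcd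

end IsPElement

section Ito

variable {G V : Type*} [Group G] [Finite G] [AddCommGroup V] [Module ℂ V] [FiniteDimensional ℂ V]
  {p : ℕ} [hp : Fact p.Prime] {σ : Representation ℂ G V}

theorem commute_of_mem_of_isPGroup (hσ : Function.Injective σ) (hV : finrank ℂ V < p)
    {P : Subgroup G} (hP : IsPGroup p P) {x y : G} (hx : x ∈ P) (hy : y ∈ P) : Commute x y :=
  congrArg Subtype.val (commute_of_isPGroup_of_finrank_lt hP
    (σ := σ.comp P.subtype) (hσ.comp P.subtype_injective) hV ⟨x, hx⟩ ⟨y, hy⟩).eq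

theorem commute_of_mem_normal_of_isPGroup (hσ : Function.Injective σ) (hV : finrank ℂ V < p)
    {T : Subgroup G} [T.Normal] (hT : IsPGroup p T) {x t : G} (hx : IsPElement p x) (ht : t ∈ T) :
    Commute x t :=
  commute_of_mem_of_isPGroup hσ hV (hT.to_sup_of_normal_left hx.isPGroup_zpowers)
    (Subgroup.mem_sup_right (Subgroup.mem_zpowers x)) (Subgroup.mem_sup_left ht)

theorem commute_of_mem_normal_of_coprime (hσ : Function.Injective σ) (hV : finrank ℂ V < p - 1)
    {R : Subgroup G} [R.Normal] (hR : p.Coprime (Nat.card R)) {x r : G} (hx : IsPElement p x)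
    (hr : r ∈ R) : Commute x r := by
  obtain ⟨a, ha⟩ := exists_orderOf_eq_prime_pow_iff.mpr hx
  let Γ := R ⊔ Subgroup.zpowers x
  let x' : Γ := ⟨x, Subgroup.mem_sup_right (Subgroup.mem_zpowers x)⟩
  have htop : R.subgroupOf Γ ⊔ Subgroup.zpowers x' = ⊤ := by
    refine eq_top_iff.mpr fun ⟨g, hg⟩ _ => ?_
    obtain ⟨s, hs, _, ⟨i, rfl⟩, rfl⟩ := Subgroup.mem_sup_of_normal_left.mp hg
    exact Subgroup.mem_sup_of_normal_left.mpr
      ⟨⟨s, Subgroup.mem_sup_left hs⟩, hs, x' ^ i, ⟨i, rfl⟩, rfl⟩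
  have hR' : p.Coprime (Nat.card (R.subgroupOf Γ)) :=
    hR.coprime_dvd_right (Subgroup.card_comap_dvd_of_injective _ _ Γ.subtype_injective)
  have hx' : orderOf x' = p ^ a := (Subgroup.orderOf_coe x').symm.trans ha
  exact (congrArg Subtype.val (commute_of_sup_zpowers_eq_top (σ := σ.comp Γ.subtype)
    (hσ.comp Γ.subtype_injective) hV _ hR' hx' htop ⟨r, Subgroup.mem_sup_left hr⟩).eq).symm

omit [Finite G] hp in
theorem exists_subgroup_mem_iff_isPElement (A : Subgroup G) [hA : A.Normal]
    (h : ∀ x ∈ A, ∀ y ∈ A, IsPElement p x → IsPElement p y → Commute x y) :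
    ∃ T : Subgroup G, T.Normal ∧ ∀ t, t ∈ T ↔ t ∈ A ∧ IsPElement p t := by
  let T : Subgroup G :=
    { carrier := {t | t ∈ A ∧ IsPElement p t}
      one_mem' := ⟨A.one_mem, .one⟩
      mul_mem' := fun {s t} hs ht =>
        ⟨A.mul_mem hs.1 ht.1, hs.2.mul ht.2 (h s hs.1 t ht.1 hs.2 ht.2)⟩
      inv_mem' := fun hs => ⟨A.inv_mem hs.1, hs.2.inv⟩ }
  exact ⟨T, ⟨fun t ht g => ⟨hA.conj_mem t ht.1 g, ht.2.conj g⟩⟩, fun _ => Iff.rfl⟩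

theorem exists_characteristic_coprime_of_isPElement_mem_center
    (h : ∀ x : G, IsPElement p x → x ∈ Subgroup.center G) :
    ∃ R : Subgroup G, R.Characteristic ∧ p.Coprime (Nat.card R) ∧
      ∀ g, ∃ t, IsPElement p t ∧ ∃ r ∈ R, t * r = g := by
  obtain ⟨P⟩ := (inferInstance : Nonempty (Sylow p G))
  have hP : (P : Subgroup G) ≤ Subgroup.center G := fun x hx => h x (.of_mem P.2 hx)
  have hPn : (P : Subgroup G).Normal :=
    ⟨fun x hx g => by rwa [Subgroup.mem_center_iff.mp (hP hx) g, mul_inv_cancel_right]⟩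
  obtain ⟨R, hR⟩ := Subgroup.exists_right_complement'_of_coprime P.card_coprime_index
  have hcop : p.Coprime (Nat.card R) := by
    rw [← hR.symm.index_eq_card]
    exact hp.out.coprime_iff_not_dvd.mpr P.not_dvd_index
  have hdec : ∀ g, ∃ t, IsPElement p t ∧ ∃ r ∈ R, t * r = g := fun g => by
    obtain ⟨⟨t, r⟩, hg⟩ := hR.2 g
    exact ⟨t, .of_mem P.2 t.2, r, r.2, hg⟩
  have hpow : ∀ r ∈ R, r ^ Nat.card R = 1 := fun r hr =>
    congrArg Subtype.val (pow_card_eq_one' (x := (⟨r, hr⟩ : R)))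
  refine ⟨R, Subgroup.characteristic_iff_le_comap.mpr fun φ r hr => ?_, hcop, hdec⟩
  obtain ⟨t, ht, s, hs, hφ⟩ := hdec (φ r)
  have hts : (t * s) ^ Nat.card R = 1 := by rw [hφ, ← map_pow, hpow r hr, map_one]
  rw [(show Commute t s from (Subgroup.mem_center_iff.mp (h t ht) s).symm).mul_pow, hpow s hs,
    mul_one] at hts
  have hφs : φ r = s := by rw [← hφ, ht.eq_one_of_pow_eq_one hcop hts, one_mul]
  exact Subgroup.mem_comap.mpr (hφs ▸ hs)

omit [Finite G] hp in
theorem mem_of_isPElement_of_coprime_card_quotient {A : Subgroup G} [A.Normal]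
    (hA : p.Coprime (Nat.card (G ⧸ A))) {x : G} (hx : IsPElement p x) : x ∈ A :=
  (QuotientGroup.eq_one_iff x).mp
    ((hx.map (QuotientGroup.mk' A)).eq_one_of_pow_eq_one hA pow_card_eq_one')

theorem sup_sylow_eq_top_of_isPGroup_quotient {A : Subgroup G} [A.Normal] (hA : IsPGroup p (G ⧸ A))
    (P : Sylow p G) : A ⊔ P = ⊤ := by
  obtain ⟨k, hk⟩ := IsPGroup.iff_card.mp hA
  obtain ⟨i, -, hi⟩ := (Nat.dvd_prime_pow hp.out).mp
    (hk ▸ Subgroup.index_dvd_of_le le_sup_left : (A ⊔ P).index ∣ p ^ k)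
  have hndvd : ¬p ∣ (A ⊔ P).index := fun h =>
    P.not_dvd_index (h.trans (Subgroup.index_dvd_of_le le_sup_right))
  rw [← Subgroup.index_eq_one, hi]
  rcases i with _ | i
  · exact pow_zero p
  · exact absurd (hi ▸ dvd_pow_self p i.succ_ne_zero) hndvd

-- With `T` the group of `p`-elements of `A`, the centralizer of `T` in `A` is `T × R` with `R` a
-- normal `p'`-subgroup of `G`. Every `p`-element of `G` centralizes `T` and `R`.
theorem commute_of_isPElement_of_isPGroup_quotient (hσ : Function.Injective σ)
    (hV : finrank ℂ V < p - 1) {A : Subgroup G} [A.Normal]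
    (hA : ∀ x ∈ A, ∀ y ∈ A, IsPElement p x → IsPElement p y → Commute x y)
    (hq : IsPGroup p (G ⧸ A)) {x y : G} (hx : IsPElement p x) (hy : IsPElement p y) :
    Commute x y := by
  have hV' : finrank ℂ V < p := hV.trans_le (Nat.sub_le p 1)
  obtain ⟨T, hTn, hT⟩ := exists_subgroup_mem_iff_isPElement A hA
  have hTp : IsPGroup p T := fun t => ((hT t).mp t.2).2.of_map T.subtype_injective
  have hcT : ∀ {z t : G}, IsPElement p z → t ∈ T → Commute z t := fun hz ht =>
    commute_of_mem_normal_of_isPGroup hσ hV' hTp hz ht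
  let M := A ⊓ Subgroup.centralizer (T : Set G)
  obtain ⟨R, hRchar, hR, hMR⟩ := exists_characteristic_coprime_of_isPElement_mem_center
    (G := M) (p := p) fun z hz => Subgroup.mem_center_iff.mpr fun m => Subtype.ext
      (Subgroup.mem_centralizer_iff.mp m.2.2 z ((hT z).mpr ⟨z.2.1, hz.map M.subtype⟩)).symm
  have hcR : ∀ {z r : G}, IsPElement p z → r ∈ R.map M.subtype → Commute z r := fun hz hr =>
    commute_of_mem_normal_of_coprime hσ hV
      (by rwa [Subgroup.card_map_of_injective M.subtype_injective]) hz hr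
  obtain ⟨P, hP⟩ := hx.isPGroup_zpowers.exists_le_sylow
  obtain ⟨a, ha, q, hq', rfl⟩ := Subgroup.mem_sup_of_normal_left.mp
    (sup_sylow_eq_top_of_isPGroup_quotient hq P ▸ Subgroup.mem_top y : y ∈ A ⊔ P)
  have haT : a ∈ Subgroup.centralizer (T : Set G) := Subgroup.mem_centralizer_iff.mpr fun t ht => by
    have h := (hcT hy ht).symm.mul_right (hcT (.of_mem P.2 hq') ht).symm.inv_right
    rwa [mul_inv_cancel_right] at h
  obtain ⟨t, ht, r, hr, hta⟩ := hMR ⟨a, ha, haT⟩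
  obtain rfl : (t * r : G) = a := congrArg Subtype.val hta
  exact ((hcT hx ((hT t).mpr ⟨t.2.1, ht.map M.subtype⟩)).mul_right (hcR hx ⟨r, hr, rfl⟩)).mul_right
    (commute_of_mem_of_isPGroup hσ hV' P.2 (hP (Subgroup.mem_zpowers x)) hq')

theorem IsPSolvable.commute_of_isPElement (hG : IsPSolvable p G) (hσ : Function.Injective σ)
    (hV : finrank ℂ V < p - 1) {x y : G} (hx : IsPElement p x) (hy : IsPElement p y) :
    Commute x y := by
  obtain ⟨m, H, h0, h1, -, hs⟩ := hG
  suffices ∀ (i : Fin (m + 1)) (x y : H i), IsPElement p x → IsPElement p y → Commute x y from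
    congrArg Subtype.val (this (Fin.last m) ⟨x, h1 ▸ Subgroup.mem_top x⟩
      ⟨y, h1 ▸ Subgroup.mem_top y⟩ (hx.of_map (Subgroup.subtype_injective _))
      (hy.of_map (Subgroup.subtype_injective _))).eq
  intro i
  induction i using Fin.induction with
  | zero =>
    intro x y _ _
    have : Subsingleton (H 0) := by rw [h0]; infer_instance
    exact Subsingleton.elim _ _
  | succ i ih =>
    intro x y hx hy
    obtain ⟨hN, hq⟩ := hs i
    have hA : ∀ x ∈ (H i.castSucc).subgroupOf (H i.succ),
        ∀ y ∈ (H i.castSucc).subgroupOf (H i.succ), IsPElement p x → IsPElement p y →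
          Commute x y := fun x hx y hy px py => by
      have hinj : Function.Injective (H i.castSucc).subtype := Subgroup.subtype_injective _
      have h := ih ⟨x, hx⟩ ⟨y, hy⟩ (.of_map hinj (px.map (H i.succ).subtype))
        (.of_map hinj (py.map (H i.succ).subtype))
      exact Subtype.ext (congrArg Subtype.val h.eq : (x * y : G) = y * x)
    rcases hq with hq | hq
    · exact commute_of_isPElement_of_isPGroup_quotient (σ := σ.comp (H i.succ).subtype)
        (hσ.comp (Subgroup.subtype_injective _)) hV hA hq hx hy
    · exact hA x (mem_of_isPElement_of_coprime_card_quotient hq.symm hx)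
        y (mem_of_isPElement_of_coprime_card_quotient hq.symm hy) hx hy

end Ito

/-! ### Extensions of `p`-solvable groups and commuting probability -/

section Extension

variable {G : Type*} [Group G] {p : ℕ}

/-- `A ≤ B` is a possible step of a series witnessing `p`-solvability: `A` is normal in `B` and
`B / A` is a `p`-group or has order prime to `p`. Unlike the definition of `IsPSolvable` this does
not mention the quotient type. -/
def IsPSolvableStep (p : ℕ) (A B : Subgroup G) : Prop :=
  A ≤ B ∧ B ≤ Subgroup.normalizer A ∧
    ((∀ b ∈ B, ∃ k : ℕ, b ^ p ^ k ∈ A) ∨ (A.relIndex B).Coprime p)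

theorem isPSolvableStep_iff {A B : Subgroup G} :
    IsPSolvableStep p A B ↔ A ≤ B ∧ ∃ _ : (A.subgroupOf B).Normal,
      IsPGroup p (B ⧸ A.subgroupOf B) ∨ (Nat.card (B ⧸ A.subgroupOf B)).Coprime p := by
  have isPGroup_iff [(A.subgroupOf B).Normal] :
      IsPGroup p (B ⧸ A.subgroupOf B) ↔ ∀ b ∈ B, ∃ k : ℕ, b ^ p ^ k ∈ A := by
    simp only [IsPGroup, (QuotientGroup.mk'_surjective (A.subgroupOf B)).forall,
      QuotientGroup.mk'_apply, ← QuotientGroup.mk_pow, QuotientGroup.eq_one_iff,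
      Subgroup.mem_subgroupOf, Subtype.forall, SubmonoidClass.mk_pow]
  refine and_congr_right fun hAB => ?_
  rw [← Subgroup.normal_subgroupOf_iff_le_normalizer hAB, ← exists_prop]
  exact exists_congr fun _ => or_congr_left isPGroup_iff.symm

theorem IsPSolvableStep.exists_series {T : Subgroup G}
    (h : Relation.ReflTransGen (IsPSolvableStep p) ⊥ T) :
    ∃ (n : ℕ) (H : Fin (n + 1) → Subgroup G), H 0 = ⊥ ∧ H (Fin.last n) = T ∧
      ∀ i : Fin n, IsPSolvableStep p (H i.castSucc) (H i.succ) := by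
  induction h with
  | refl => exact ⟨0, fun _ => ⊥, rfl, rfl, fun i => i.elim0⟩
  | @tail B C _ hC ih =>
    obtain ⟨n, H, h0, hl, hs⟩ := ih
    refine ⟨n + 1, Fin.snoc (α := fun _ => Subgroup G) H C, ?_, Fin.snoc_last _ _, fun i => ?_⟩
    · rw [← Fin.castSucc_zero, Fin.snoc_castSucc, h0]
    · induction i using Fin.lastCases with
      | last => rwa [Fin.snoc_castSucc, Fin.succ_last, Fin.snoc_last, hl]
      | cast i =>
        rw [Fin.snoc_castSucc, Fin.succ_castSucc, Fin.snoc_castSucc]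
        exact hs i

theorem isPSolvable_iff_reflTransGen :
    IsPSolvable p G ↔ Relation.ReflTransGen (IsPSolvableStep p) (⊥ : Subgroup G) ⊤ := by
  constructor
  · rintro ⟨n, H, h0, hl, hle, hs⟩
    suffices ∀ i, Relation.ReflTransGen (IsPSolvableStep p) ⊥ (H i) from hl ▸ this _
    intro i
    induction i using Fin.induction with
    | zero => rw [h0]
    | succ i ih => exact ih.tail (isPSolvableStep_iff.mpr ⟨hle i, hs i⟩)
  · intro h
    obtain ⟨n, H, h0, hl, hs⟩ := IsPSolvableStep.exists_series h
    exact ⟨n, H, h0, hl, fun i => (hs i).1, fun i => (isPSolvableStep_iff.mp (hs i)).2⟩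

variable {H : Type*} [Group H]

theorem IsPSolvableStep.map {f : G →* H} (hf : Function.Injective f) {A B : Subgroup G}
    (h : IsPSolvableStep p A B) : IsPSolvableStep p (A.map f) (B.map f) := by
  refine ⟨Subgroup.map_mono h.1, (Subgroup.map_mono h.2.1).trans (Subgroup.le_normalizer_map f),
    h.2.2.imp ?_ fun hc => ?_⟩
  · rintro hp _ ⟨b, hb, rfl⟩
    obtain ⟨k, hk⟩ := hp b hb
    exact ⟨k, map_pow f b _ ▸ Subgroup.mem_map_of_mem f hk⟩
  · rwa [Subgroup.relIndex_map_map_of_injective _ _ hf]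

theorem IsPSolvableStep.comap {f : G →* H} (hf : Function.Surjective f) {A B : Subgroup H}
    (h : IsPSolvableStep p A B) : IsPSolvableStep p (A.comap f) (B.comap f) := by
  refine ⟨Subgroup.comap_mono h.1,
    (Subgroup.comap_mono h.2.1).trans (Subgroup.le_normalizer_comap f),
    h.2.2.imp (fun hp b hb => ?_) fun hc => ?_⟩
  · obtain ⟨k, hk⟩ := hp (f b) hb
    exact ⟨k, by rwa [Subgroup.mem_comap, map_pow]⟩
  · rwa [Subgroup.relIndex_comap, Subgroup.map_comap_eq_self_of_surjective hf]

theorem IsPSolvable.of_quotient (N : Subgroup G) [N.Normal] (hN : IsPSolvable p N)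
    (hGN : IsPSolvable p (G ⧸ N)) : IsPSolvable p G := by
  rw [isPSolvable_iff_reflTransGen] at *
  have bot_to_N : Relation.ReflTransGen (IsPSolvableStep p) ⊥ N := by
    simpa [Function.onFun, ← MonoidHom.range_eq_map] using
      Relation.ReflTransGen.lift (p := IsPSolvableStep p) (Subgroup.map N.subtype)
        (fun _ _ h => IsPSolvableStep.map N.subtype_injective h) _ _ hN
  have N_to_top : Relation.ReflTransGen (IsPSolvableStep p) N ⊤ := by
    simpa [Function.onFun] using
      Relation.ReflTransGen.lift (p := IsPSolvableStep p) (Subgroup.comap (QuotientGroup.mk' N))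
        (fun _ _ h => IsPSolvableStep.comap (QuotientGroup.mk'_surjective N) h) _ _ hGN
  exact bot_to_N.trans N_to_top

theorem isPSolvable_of_isPGroup (h : IsPGroup p G) : IsPSolvable p G :=
  isPSolvable_iff_reflTransGen.mpr <| .single ⟨bot_le, (Subgroup.normalizer_eq_top ⊥).ge,
    Or.inl fun b _ => (h b).imp fun _ hk => Subgroup.mem_bot.mpr hk⟩

theorem isPSolvable_of_coprime (h : (Nat.card G).Coprime p) : IsPSolvable p G :=
  isPSolvable_iff_reflTransGen.mpr <| .single ⟨bot_le, (Subgroup.normalizer_eq_top ⊥).ge,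
    Or.inr <| by rwa [Subgroup.relIndex_top_right, Subgroup.index_bot]⟩

end Extension

section CommutingProbability

variable {G : Type*} [Group G] [Finite G]

theorem card_commute_le_index_mul (H : Subgroup G) (g : G) :
    Nat.card {x : G // Commute g x} ≤ H.index * Nat.card {x : H // Commute g x} := by
  let C := Subgroup.centralizer {g}
  have mem_C (x : G) : x ∈ C ↔ Commute g x := Subgroup.mem_centralizer_singleton_iff.trans
    ⟨Eq.symm, Eq.symm⟩
  have card_C : Nat.card {x : G // Commute g x} = Nat.card C :=
    Nat.card_congr (Equiv.subtypeEquivRight fun x => (mem_C x).symm)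
  have card_inf : Nat.card {x : H // Commute g x} = Nat.card (H.subgroupOf C) :=
    Nat.card_congr
      { toFun x := ⟨⟨x, (mem_C _).mpr x.2⟩, x.1.2⟩
        invFun x := ⟨⟨x, x.2⟩, (mem_C _).mp x.1.2⟩ }
  rw [card_C, card_inf, ← (H.subgroupOf C).index_mul_card]
  exact Nat.mul_le_mul_right _ (H.relIndex_top_right ▸ Subgroup.relIndex_le_of_le_right le_top
    (H.relIndex_top_right ▸ Subgroup.index_ne_zero_of_finite))

theorem card_commute_pairs_le_index_mul {ι : Type*} [Finite ι] (f : ι → G) (H : Subgroup G) :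
    Nat.card {x : ι × G // Commute (f x.1) x.2} ≤
      H.index * Nat.card {x : ι × H // Commute (f x.1) x.2} := by
  rw [Nat.card_congr (Equiv.subtypeProdEquivSigmaSubtype fun i (x : G) => Commute (f i) x),
    Nat.card_congr (Equiv.subtypeProdEquivSigmaSubtype fun i (x : H) => Commute (f i) x),
    Nat.card_sigma, Nat.card_sigma, mul_sum]
  exact sum_le_sum fun i _ => card_commute_le_index_mul H (f i)

theorem commProb_le_commProb_subgroup (H : Subgroup G) : commProb G ≤ commProb H := by
  have swap : Nat.card {x : G × H // Commute x.1 (x.2 : G)} =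
      Nat.card {x : H × G // Commute (x.1 : G) x.2} :=
    Nat.card_congr ((Equiv.prodComm G H).subtypeEquiv fun _ => ⟨Commute.symm, Commute.symm⟩)
  have coe : Nat.card {x : H × H // Commute (x.1 : G) x.2} =
      Nat.card {x : H × H // Commute x.1 x.2} :=
    Nat.card_congr (Equiv.subtypeEquivRight fun _ => by simp [Commute, SemiconjBy, Subtype.ext_iff])
  have h := (card_commute_pairs_le_index_mul id H).trans
    (Nat.mul_le_mul_left _ (swap.trans_le (card_commute_pairs_le_index_mul Subtype.val H)))
  rw [coe, ← mul_assoc, ← sq] at h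
  have hG : 0 < Nat.card G := Nat.card_pos
  have hH : 0 < Nat.card H := Nat.card_pos
  rw [commProb_def, commProb_def, div_le_div_iff₀ (by positivity) (by positivity),
    ← H.index_mul_card, Nat.cast_mul, mul_pow, ← mul_assoc, mul_comm _ ((H.index : ℚ) ^ 2)]
  gcongr
  exact_mod_cast h

theorem commProb_le_commProb_quotient (N : Subgroup G) [N.Normal] :
    commProb G ≤ commProb (G ⧸ N) := by
  let f (x : G) : (G ⧸ N) × N := (x, ⟨(x : G ⧸ N).out⁻¹ * x, by
    rw [← QuotientGroup.eq, QuotientGroup.out_eq']⟩)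
  have hf : Function.Injective f := fun x y h => by
    obtain ⟨hq, hn⟩ := Prod.ext_iff.mp h
    have hn : (x : G ⧸ N).out⁻¹ * x = (y : G ⧸ N).out⁻¹ * y := congrArg Subtype.val hn
    rwa [show (x : G ⧸ N) = y from hq, mul_right_inj] at hn
  let F (x : {x : G × G // Commute x.1 x.2}) :
      {x : (G ⧸ N) × (G ⧸ N) // Commute x.1 x.2} × (N × N) :=
    (⟨(x.1.1, x.1.2), x.2.map (QuotientGroup.mk' N)⟩, ((f x.1.1).2, (f x.1.2).2))
  have h := Nat.card_le_card_of_injective F fun x y h => by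
    simp only [F, Prod.ext_iff, Subtype.ext_iff] at h
    exact Subtype.ext (Prod.ext (hf (Prod.ext h.1.1 (Subtype.ext h.2.1)))
      (hf (Prod.ext h.1.2 (Subtype.ext h.2.2))))
  rw [Nat.card_prod, Nat.card_prod, ← sq] at h
  have hG : 0 < Nat.card G := Nat.card_pos
  have hQ : 0 < Nat.card (G ⧸ N) := Nat.card_pos
  rw [commProb_def, commProb_def, div_le_div_iff₀ (by positivity) (by positivity),
    Subgroup.card_eq_card_quotient_mul_card_subgroup N, Nat.cast_mul, mul_pow, mul_left_comm,
    mul_comm]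
  gcongr
  exact_mod_cast h

end CommutingProbability

/-! ### Class numbers of simple groups -/

section SimpleGroup

variable {G : Type*} [Group G]

theorem center_eq_bot_of_isSimpleGroup [Finite G] [IsSimpleGroup G] {p : ℕ} [hp : Fact p.Prime]
    (hd : p ∣ Nat.card G) (hG : ¬IsPGroup p G) : Subgroup.center G = ⊥ := by
  refine (Subgroup.Normal.eq_bot_or_eq_top inferInstance).resolve_right fun hc => hG ?_
  let _ := Group.commGroupOfCenterEqTop hc
  rw [IsPGroup.iff_card]
  exact ⟨1, ((Nat.prime_dvd_prime_iff_eq hp.out IsSimpleGroup.prime_card).mp hd).symm.trans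
    (pow_one p).symm⟩

namespace Irr

variable [Finite G] {X : Irr G}

theorem rep_injective [IsSimpleGroup G] (hX : X ≠ trivial G) : Function.Injective X.rep := by
  rw [← MonoidHom.ker_eq_bot_iff]
  refine (MonoidHom.normal_ker X.rep).eq_bot_or_eq_top.resolve_right fun h => ?_
  have hone (g : G) : X.rep.character g = X.degree := by
    rw [← character_rep_one, character, character, map_one,
      MonoidHom.mem_ker.mp (h ▸ Subgroup.mem_top g)]
  have hsum := sum_character_eq_zero hX
  simp only [hone, sum_const, card_univ, nsmul_eq_mul, mul_eq_zero, Nat.cast_eq_zero] at hsum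
  exact hsum.elim Fintype.card_ne_zero X.degree_pos.ne'

theorem rep_ne_smul_one (hX : Function.Injective X.rep) {y : G} (hy : y ∉ Subgroup.center G)
    (c : ℂ) : X.rep y ≠ c • 1 := fun h => hy <| Subgroup.mem_center_iff.mpr fun g =>
  hX (by rw [map_mul, map_mul, h, mul_smul_comm, smul_mul_assoc, mul_one, one_mul])

theorem two_le_degree (hX : Function.Injective X.rep) (hG : Subgroup.center G ≠ ⊤) :
    2 ≤ X.degree := by
  obtain ⟨y, -, hy⟩ := SetLike.exists_of_lt (lt_top_iff_ne_top.mpr hG)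
  by_contra! hlt
  have : Subsingleton (Fin X.degree) := Fin.subsingleton_iff_le_one.mpr (Nat.le_of_lt_succ hlt)
  let z : Fin X.degree := ⟨0, X.degree_pos⟩
  refine rep_ne_smul_one hX hy (X.rep y (Pi.single z 1) z) (LinearMap.pi_ext' fun a => ?_)
  ext b
  simp [Subsingleton.elim a z, Subsingleton.elim b z]

theorem one_add_card_conjClasses_sub_one_mul_sq_le {q : ℕ}
    (hq : ∀ X : Irr G, X ≠ trivial G → q ≤ X.degree) :
    1 + (Nat.card (ConjClasses G) - 1) * q ^ 2 ≤ Nat.card G := by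
  rw [← card_irr, ← sum_degree_sq, ← add_sum_erase _ _ (mem_univ (trivial G)), degree_trivial,
    one_pow, ← card_univ, ← card_erase_of_mem (mem_univ (trivial G)), ← smul_eq_mul]
  gcongr
  exact card_nsmul_le_sum _ _ _ fun X hX => Nat.pow_le_pow_left (hq X (ne_of_mem_erase hX)) 2

end Irr

end SimpleGroup

section EigenMultSq

theorem sum_sum_sub_sq {ι : Type*} [Fintype ι] (a : ι → ℤ) :
    ∑ i, ∑ j, (a i - a j) ^ 2 = 2 * (Fintype.card ι * ∑ i, a i ^ 2 - (∑ i, a i) ^ 2) := by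
  simp only [sub_sq, sum_sub_distrib, sum_add_distrib, sum_const, card_univ, nsmul_eq_mul,
    ← mul_sum, ← sum_mul]
  ring

-- Replacing `a` by the indicator function of `A` can only decrease all `(a i - a j) ^ 2`.
theorem sq_sum_add_card_mul_le {ι : Type*} [Fintype ι] (a : ι → ℕ) (A : Finset ι)
    (hA : ∀ i ∈ A, ∀ j ∉ A, a i ≠ a j) :
    (∑ i, a i) ^ 2 + #A * (Fintype.card ι - #A) ≤ Fintype.card ι * ∑ i, a i ^ 2 := by
  classical
  let χ (i : ι) : ℤ := if i ∈ A then 1 else 0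
  have hχ (i j : ι) : (χ i - χ j) ^ 2 ≤ ((a i : ℤ) - a j) ^ 2 := by
    have hpos (h : a i ≠ a j) : (1 : ℤ) ≤ ((a i : ℤ) - a j) ^ 2 :=
      Int.add_one_le_of_lt (sq_pos_of_ne_zero (sub_ne_zero.mpr (mod_cast h)))
    by_cases hi : i ∈ A <;> by_cases hj : j ∈ A
    · simp [χ, hi, hj, sq_nonneg]
    · simpa [χ, hi, hj] using hpos (hA i hi j hj)
    · simpa [χ, hi, hj] using hpos (hA j hj i hi).symm
    · simp [χ, hi, hj, sq_nonneg]
  have h := sum_le_sum fun i (_ : i ∈ univ) => sum_le_sum fun j (_ : j ∈ univ) => hχ i j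
  rw [sum_sum_sub_sq, sum_sum_sub_sq, mul_le_mul_iff_right₀ two_pos] at h
  simp only [χ, ite_pow, one_pow, ne_eq, OfNat.ofNat_ne_zero, not_false_eq_true, zero_pow,
    sum_ite_mem, univ_inter, sum_const, nsmul_eq_mul, mul_one] at h
  zify [card_le_univ A]
  linarith

variable {n : ℕ} [NeZero n] {V : Type*} [AddCommGroup V] [Module ℂ V] [FiniteDimensional ℂ V]
  {f : Module.End ℂ V}

theorem finrank_sq_add_card_mul_le (hf : f ^ n = 1) (A : Finset (ZMod n))
    (hA : ∀ i ∈ A, ∀ j ∉ A, eigenMult f i ≠ eigenMult f j) :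
    finrank ℂ V ^ 2 + #A * (n - #A) ≤ n * ∑ j : ZMod n, eigenMult f j ^ 2 := by
  simpa [sum_eigenMult hf, ZMod.card] using sq_sum_add_card_mul_le (fun j => eigenMult f j) A hA

theorem mul_sub_le_mul_sub {e q p : ℕ} (h₁ : e ≤ q) (h₂ : q + e ≤ p) :
    e * (p - e) ≤ q * (p - q) := by
  zify [show e ≤ p by omega, show q ≤ p by omega]
  zify at h₁ h₂
  nlinarith

theorem finrank_sq_add_card_eigenMult_ne_zero_mul_le (hf : f ^ n = 1) :
    finrank ℂ V ^ 2 + #{j : ZMod n | eigenMult f j ≠ 0} * (n - #{j : ZMod n | eigenMult f j ≠ 0}) ≤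
      n * ∑ j : ZMod n, eigenMult f j ^ 2 :=
  finrank_sq_add_card_mul_le hf _ fun i hi j hj h => by
    simp only [mem_filter_univ] at hi hj
    exact hj (h ▸ hi)

theorem card_eigenMult_ne_zero_le_finrank (hf : f ^ n = 1) :
    #{j : ZMod n | eigenMult f j ≠ 0} ≤ finrank ℂ V := by
  rw [card_eq_sum_ones, ← sum_eigenMult hf]
  exact (sum_le_sum fun j hj => Nat.one_le_iff_ne_zero.mpr (mem_filter_univ j |>.mp hj)).trans
    (sum_le_sum_of_subset (subset_univ _))

theorem finrank_sq_add_sub_one_le (hf : f ^ n = 1) (h0 : 0 < finrank ℂ V) (hV : finrank ℂ V < n) :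
    finrank ℂ V ^ 2 + (n - 1) ≤ n * ∑ j : ZMod n, eigenMult f j ^ 2 := by
  have hpos : 0 < #{j : ZMod n | eigenMult f j ≠ 0} := by
    obtain ⟨j, -, hj⟩ := exists_ne_zero_of_sum_ne_zero ((sum_eigenMult (n := n) hf).trans_ne h0.ne')
    exact card_pos.mpr ⟨j, by simpa using hj⟩
  have := mul_sub_le_mul_sub (e := 1) hpos ((card_eigenMult_ne_zero_le_finrank hf).trans_lt hV)
  have := finrank_sq_add_card_eigenMult_ne_zero_mul_le hf
  omega

variable {G : Type*} [Group G] {y : G}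

theorem card_mul_sum_eigenMult_sq (ρ : Representation ℂ G V) (hy : y ^ n = 1) :
    (n : ℂ) * ∑ j : ZMod n, (eigenMult (ρ y) j : ℂ) ^ 2 =
      ∑ i : ZMod n, ρ.character (y ^ i.val) * ρ.character (y ^ i.val)⁻¹ := by
  have hρ : ρ y ^ n = 1 := by rw [← map_pow, hy, map_one]
  have hinv (i : ZMod n) : ρ.character (y ^ i.val)⁻¹ =
      ∑ j : ZMod n, eigenMult (ρ y) j * ZMod.stdAddChar (-(j * i)) := by
    have hi : (y ^ i.val)⁻¹ = y ^ (-i).val := by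
      rw [inv_eq_iff_mul_eq_one, ← pow_add]
      obtain ⟨c, hc⟩ := (ZMod.natCast_eq_zero_iff (i.val + (-i).val) n).mp (by simp)
      rw [hc, pow_mul, hy, one_pow]
    rw [hi, character, map_pow, trace_pow_eq_sum_eigenMult hρ]
    simp
  simp only [hinv, mul_sum, sq, ← mul_assoc, card_mul_eigenMult_eq_sum_character ρ hy, sum_mul]
  rw [sum_comm]
  exact sum_congr rfl fun i _ => sum_congr rfl fun j _ => by ring

end EigenMultSq

section PrimeOrder

variable {G : Type*} [Group G] [Finite G] {p : ℕ} [hp : Fact p.Prime] {y : G}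

omit [Finite G] in
theorem centralizer_pow_val (hy : orderOf y = p) {i : ZMod p} (hi : i ≠ 0) :
    Subgroup.centralizer {y ^ i.val} = Subgroup.centralizer {y} := by
  obtain ⟨m, hm⟩ := exists_pow_eq_self_of_coprime (x := y) (n := i.val)
    (hy ▸ ZMod.val_coe_unit_coprime (Units.mk0 i hi))
  ext g
  simp only [Subgroup.mem_centralizer_singleton_iff, ← commute_iff_eq]
  exact ⟨fun h => hm ▸ h.pow_right m, fun h => h.pow_right _⟩

namespace Irr

theorem sum_mul_sum_eigenMult_sq (hy : orderOf y = p) :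
    ∑ X : Irr G, p * ∑ j : ZMod p, eigenMult (X.rep y) j ^ 2 =
      Nat.card G + (p - 1) * Nat.card (Subgroup.centralizer {y}) := by
  have hyp : y ^ p = 1 := hy ▸ pow_orderOf_eq_one y
  have hsum : ∑ X : Irr G, p * ∑ j : ZMod p, eigenMult (X.rep y) j ^ 2 =
      ∑ i : ZMod p, Nat.card (Subgroup.centralizer {y ^ i.val}) := by
    have h : ∑ X : Irr G, (p : ℂ) * ∑ j : ZMod p, (eigenMult (X.rep y) j : ℂ) ^ 2 =
        ∑ i : ZMod p, (Nat.card (Subgroup.centralizer {y ^ i.val}) : ℂ) := by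
      simp only [fun X : Irr G => card_mul_sum_eigenMult_sq X.rep hyp,
        ← sum_irr_character_mul_character_inv_self]
      exact sum_comm
    exact_mod_cast h
  rw [hsum, ← add_sum_erase _ _ (mem_univ (0 : ZMod p)),
    sum_congr rfl fun i hi => by rw [centralizer_pow_val hy (ne_of_mem_erase hi)], sum_const,
    card_erase_of_mem (mem_univ _), card_univ, ZMod.card, smul_eq_mul, ZMod.val_zero,
    pow_zero, Subgroup.centralizer_eq_top_iff_subset.mpr (by simp [one_mem]), Subgroup.card_top]

theorem mul_sum_eigenMult_sq_trivial (hy : y ^ p = 1) :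
    p * ∑ j : ZMod p, eigenMult ((trivial G).rep y) j ^ 2 = p := by
  have h := card_mul_sum_eigenMult_sq (trivial G).rep hy
  simp only [character_trivial, mul_one, sum_const, card_univ, ZMod.card, nsmul_eq_mul] at h
  exact_mod_cast h

theorem degree_sq_le_mul_sum_eigenMult_sq (hy : y ^ p = 1) (X : Irr G) :
    X.degree ^ 2 ≤ p * ∑ j : ZMod p, eigenMult (X.rep y) j ^ 2 := by
  simpa using finrank_sq_add_card_mul_le (show X.rep y ^ p = 1 by rw [← map_pow, hy, map_one]) ∅
    (by simp)

theorem degree_sq_add_sub_one_le_mul_sum_eigenMult_sq (hy : y ^ p = 1) {X : Irr G}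
    (hX : X.degree < p) :
    X.degree ^ 2 + (p - 1) ≤ p * ∑ j : ZMod p, eigenMult (X.rep y) j ^ 2 := by
  simpa using finrank_sq_add_sub_one_le (show X.rep y ^ p = 1 by rw [← map_pow, hy, map_one])
    (by simpa using X.degree_pos) (by simpa using hX)

end Irr

theorem card_conjClasses_mul_sq_le (hy : orderOf y = p) :
    Nat.card (ConjClasses G) * p ^ 2 ≤
      Nat.card G + p ^ 2 * Nat.card (Subgroup.centralizer {y}) := by
  have hyp : y ^ p = 1 := hy ▸ pow_orderOf_eq_one y
  obtain ⟨Q, hQ⟩ : ∃ Q : Irr G → ℕ, ∀ X, Q X = p * ∑ j : ZMod p, eigenMult (X.rep y) j ^ 2 :=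
    ⟨_, fun _ => rfl⟩
  have hX (X : Irr G) : (p - 1) * p ^ 2 + p ^ 2 * X.degree ^ 2 ≤
      (p - 1) * X.degree ^ 2 + p ^ 2 * Q X := by
    rw [hQ]
    rcases lt_or_ge X.degree p with h | h
    · have := Irr.degree_sq_add_sub_one_le_mul_sum_eigenMult_sq hyp h
      nlinarith [Nat.zero_le ((p - 1) * X.degree ^ 2), Nat.mul_le_mul_left (p ^ 2) this]
    · gcongr
      exact X.degree_sq_le_mul_sum_eigenMult_sq hyp
  have hsumQ := Irr.sum_mul_sum_eigenMult_sq hy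
  simp only [← hQ] at hsumQ
  have hsum := sum_le_sum fun X (_ : X ∈ univ) => hX X
  simp only [sum_add_distrib, ← mul_sum, hsumQ, Irr.sum_degree_sq, sum_const, card_univ,
    Irr.card_irr, smul_eq_mul] at hsum
  refine le_of_mul_le_mul_left (a := p - 1) ?_ (Nat.sub_pos_of_lt hp.out.one_lt)
  linarith

end PrimeOrder

/-! ### Constituents of `χχ̄` -/

section LinHom

variable {G V : Type*} [Group G] [Finite G] [AddCommGroup V] [Module ℂ V] [FiniteDimensional ℂ V]

theorem mult_linHom_trivial (ρ : Representation ℂ G V) :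
    mult (linHom ρ ρ) (Irr.trivial G).rep = mult ρ ρ := by
  have h : (Nat.card G : ℂ) * mult (linHom ρ ρ) (Irr.trivial G).rep = Nat.card G * mult ρ ρ := by
    rw [card_mul_mult, card_mul_mult]
    simp [mul_comm]
  exact_mod_cast mul_left_cancel₀ (cast_natCard_ne_zero G) h

omit [Finite G] in
theorem exists_eq_smul_of_mult_self_le_one {ρ : Representation ℂ G V} (hρ : mult ρ ρ ≤ 1)
    {f : Module.End ℂ V} (hf : ∀ g, Commute f (ρ g)) : ∃ c : ℂ, f = c • 1 := by
  rcases subsingleton_or_nontrivial V with hV | hV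
  · exact ⟨0, Subsingleton.elim _ _⟩
  let F : IntertwiningMap ρ ρ := ⟨f, hf⟩
  let I : IntertwiningMap ρ ρ := ⟨1, fun _ => rfl⟩
  obtain ⟨v, hv⟩ := finrank_le_one_iff.mp hρ
  obtain ⟨a, ha⟩ := hv I
  obtain ⟨b, hb⟩ := hv F
  have ha' : a • v.toLinearMap = 1 := congrArg IntertwiningMap.toLinearMap ha
  have hb' : b • v.toLinearMap = f := congrArg IntertwiningMap.toLinearMap hb
  have ha0 : a ≠ 0 := by
    rintro rfl
    exact zero_ne_one ((zero_smul ℂ _).symm.trans ha')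
  exact ⟨b * a⁻¹, by rw [← ha', smul_smul, inv_mul_cancel_right₀ ha0, hb']⟩

omit [Finite G] in
theorem exists_eigenMult_ne_zero_of_linHom {n : ℕ} [NeZero n] {ρ : Representation ℂ G V} {y : G}
    (hy : y ^ n = 1) {j : ZMod n} (hj : eigenMult (linHom ρ ρ y) j ≠ 0) :
    ∃ i : ZMod n, eigenMult (ρ y) i ≠ 0 ∧ eigenMult (ρ y) (i + j) ≠ 0 := by
  by_contra! hne
  have hy' : ρ y ^ n = 1 := by rw [← map_pow, hy, map_one]
  refine hj (Submodule.finrank_eq_zero.mpr (eq_bot_iff.mpr fun T hT => ?_))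
  have hTy (v : V) : ρ y (T v) = ZMod.stdAddChar j • T (ρ y v) := by
    simpa [linHom_apply] using congrArg (fun S => S (ρ y v)) (End.mem_eigenspace_iff.mp hT)
  suffices ⨆ i : ZMod n, End.eigenspace (ρ y) (ZMod.stdAddChar i) ≤ LinearMap.ker T by
    rw [(isInternal_eigenspace_stdAddChar hy').submodule_iSup_eq_top, top_le_iff] at this
    exact LinearMap.ker_eq_top.mp this
  refine iSup_le fun i v hv => ?_
  by_cases hi : eigenMult (ρ y) i = 0
  · rw [Submodule.finrank_eq_zero.mp hi, Submodule.mem_bot] at hv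
    simp [hv]
  · have hTv : T v ∈ End.eigenspace (ρ y) (ZMod.stdAddChar (i + j)) := by
      rw [End.mem_eigenspace_iff, hTy, End.mem_eigenspace_iff.mp hv, map_smul, smul_smul,
        AddChar.map_add_eq_mul, mul_comm]
    rwa [Submodule.finrank_eq_zero.mp (hne i hi), Submodule.mem_bot] at hTv

theorem exists_eigenMult_ne_zero_of_mult_linHom_ne_zero {n : ℕ} [NeZero n]
    {ρ : Representation ℂ G V} {y : G} (hy : y ^ n = 1) {ψ : Irr G}
    (hψ : mult (linHom ρ ρ) ψ.rep ≠ 0) {j : ZMod n} (hj : eigenMult (ψ.rep y) j ≠ 0) :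
    ∃ i : ZMod n, eigenMult (ρ y) i ≠ 0 ∧ eigenMult (ρ y) (i + j) ≠ 0 := by
  refine exists_eigenMult_ne_zero_of_linHom hy fun h => ?_
  rw [eigenMult_eq_sum_mult _ hy, sum_eq_zero_iff] at h
  exact mul_ne_zero hψ hj (h ψ (mem_univ ψ))

theorem Irr.exists_ne_trivial_mult_linHom_ne_zero (H : Subgroup G) {X : Irr G}
    (hX : 2 ≤ mult (X.rep.comp H.subtype) (X.rep.comp H.subtype)) :
    ∃ ψ ≠ trivial G, mult (linHom X.rep X.rep) ψ.rep ≠ 0 ∧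
      mult (ψ.rep.comp H.subtype) (trivial H).rep ≠ 0 := by
  have htriv : mult ((trivial G).rep.comp H.subtype) (trivial H).rep = 1 := by
    have h : (Nat.card H : ℂ) * mult ((trivial G).rep.comp H.subtype) (trivial H).rep =
        Nat.card H * (1 : ℕ) := by
      have hχ (h : H) : character ((trivial G).rep.comp H.subtype) h = 1 := character_trivial _
      rw [card_mul_mult]
      simp [hχ]
    exact_mod_cast mul_left_cancel₀ (cast_natCard_ne_zero H) h
  have hX' : 2 ≤ mult ((linHom X.rep X.rep).comp H.subtype) (trivial H).rep :=
    hX.trans_eq (mult_linHom_trivial (X.rep.comp H.subtype)).symm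
  rw [mult_comp_eq_sum_mult, ← add_sum_erase _ _ (mem_univ (trivial G)), mult_linHom_trivial,
    mult_rep_rep, if_pos rfl, htriv] at hX'
  obtain ⟨ψ, hψ, hne⟩ := exists_ne_zero_of_sum_ne_zero
    (s := univ.erase (trivial G)) (f := fun ψ : Irr G =>
      mult (linHom X.rep X.rep) ψ.rep * mult (ψ.rep.comp H.subtype) (trivial H).rep) (by omega)
  exact ⟨ψ, ne_of_mem_erase hψ, left_ne_zero_of_mul hne, right_ne_zero_of_mul hne⟩

end LinHom

/-! ### Elements of prime order and small fusion -/

theorem stabilizer_eq_bot_of_ne_zero {F : Type*} [Field F] (H : Subgroup Fˣ) {l : F}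
    (hl : l ≠ 0) : MulAction.stabilizer H l = ⊥ := by
  refine (Subgroup.eq_bot_iff_forall _).mpr fun u hu => Subtype.ext (Units.ext ?_)
  exact (mul_eq_right₀ hl).mp hu

theorem notMem_orbit_zero {F : Type*} [Field F] (H : Subgroup Fˣ) {l : F} (hl : l ≠ 0) :
    l ∉ MulAction.orbit H (0 : F) := by
  rintro ⟨u, rfl⟩
  exact hl (smul_zero u)

theorem card_orbit_toFinset_le {H α : Type*} [Group H] [Finite H] [MulAction H α] [Finite α]
    (a : α) :
    #(MulAction.orbit H a).toFinset ≤ Nat.card H := by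
  rw [Set.toFinset_card, ← Nat.card_eq_fintype_card]
  exact Finite.card_range_le _

theorem mul_eq_zero_of_not_isUnit {F : Type*} [Field F] (s : F) : ∀ l, ¬IsUnit l → s * l = 0 :=
  fun l hl => by simp [of_not_not fun h => hl (isUnit_iff_ne_zero.mpr h)]

/-- The nonzero exponents `j` for which `exp(2πij/n)` is an eigenvalue of `f`. -/
noncomputable def eigenSupport {V : Type*} [AddCommGroup V] [Module ℂ V] {n : ℕ} [NeZero n]
    (f : Module.End ℂ V) : Finset (ZMod n) :=
  {j | j ≠ 0 ∧ eigenMult f j ≠ 0}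

section EigenSupport

variable {V : Type*} [AddCommGroup V] [Module ℂ V] [FiniteDimensional ℂ V] {n : ℕ} [NeZero n]
  {f : Module.End ℂ V}

omit [FiniteDimensional ℂ V] in
theorem mem_eigenSupport {j : ZMod n} : j ∈ eigenSupport f ↔ j ≠ 0 ∧ eigenMult f j ≠ 0 := by
  simp [eigenSupport]

theorem card_eigenSupport_le (hf : f ^ n = 1) : #(eigenSupport (n := n) f) ≤ finrank ℂ V := by
  refine (card_le_card fun j hj => ?_).trans (card_eigenMult_ne_zero_le_finrank hf)
  exact (mem_filter_univ j).mpr (mem_eigenSupport.mp hj).2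

theorem eigenSupport_nonempty (hf : f ^ n = 1) (hscalar : ∀ c : ℂ, f ≠ c • 1) :
    (eigenSupport (n := n) f).Nonempty := by
  by_contra h
  exact hscalar _ (eq_smul_of_eigenMult_eq_zero hf 0 fun i hi =>
    by_contra fun hi' => h ⟨i, mem_eigenSupport.mpr ⟨hi, hi'⟩⟩)

end EigenSupport

theorem lt_card_erase_zero_sdiff {p e : ℕ} [NeZero p] {s : Finset (ZMod p)}
    (h : e + #s < p - 1) : e < #(univ.erase 0 \ s) := by
  refine lt_of_lt_of_le ?_ (le_card_sdiff _ _)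
  rw [card_erase_of_mem (mem_univ _), card_univ, ZMod.card]
  omega

theorem card_le_sum_mul_self {ι : Type*} [Fintype ι] {w : ι → ℤ} {s : Finset ι}
    (hs : ∀ i ∈ s, w i ≠ 0) : (#s : ℤ) ≤ ∑ i, w i * w i := by
  rw [card_eq_sum_ones]
  push_cast
  exact (sum_le_sum fun i hi => Int.add_one_le_of_lt (mul_self_pos.mpr (hs i hi))).trans
    (sum_le_sum_of_subset_of_nonneg (subset_univ s) fun i _ _ => mul_self_nonneg (w i))

namespace CentralizerSplitting

open ZMod (stdAddChar)

variable {G : Type*} [Group G] {p : ℕ} [Fact p.Prime] {y : G} (S : CentralizerSplitting y p)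

theorem eigenMult_eq_of_mem_orbit {V : Type*} [AddCommGroup V] [Module ℂ V]
    [FiniteDimensional ℂ V] (ρ : Representation ℂ G V) {i j : ZMod p}
    (h : i ∈ MulAction.orbit S.fusion j) : eigenMult (ρ y) i = eigenMult (ρ y) j := by
  obtain ⟨u, rfl⟩ := h
  exact S.eigenMult_smul ρ u j

/-- The nonzero exponents in neither of the orbits of `i` and `j`. -/
noncomputable def offOrbits (i j : ZMod p) : Finset (ZMod p) :=
  univ.erase 0 \ ((MulAction.orbit S.fusion i).toFinset ∪ (MulAction.orbit S.fusion j).toFinset)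

theorem mem_offOrbits {i j l : ZMod p} : l ∈ S.offOrbits i j ↔
    l ≠ 0 ∧ l ∉ MulAction.orbit S.fusion i ∧ l ∉ MulAction.orbit S.fusion j := by
  simp [offOrbits]

theorem sub_le_card_offOrbits (i j : ZMod p) :
    p - 1 - 2 * Nat.card S.fusion ≤ #(S.offOrbits i j) := by
  have hi := card_orbit_toFinset_le (H := S.fusion) i
  have hj := card_orbit_toFinset_le (H := S.fusion) j
  refine le_trans ?_ (le_card_sdiff _ _)
  rw [card_erase_of_mem (mem_univ _), card_univ, ZMod.card]
  have := card_union_le (MulAction.orbit S.fusion i).toFinset (MulAction.orbit S.fusion j).toFinset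
  omega

variable [Finite G] {X ψ : Irr G}

theorem mem_orbit_of_mem_eigenSupport
    (hψ : Nat.card S.fusion + #(eigenSupport (n := p) (ψ.rep y)) < p - 1) {j₁ j₂ : ZMod p}
    (hj₁ : j₁ ∈ eigenSupport (ψ.rep y)) (hj₂ : j₂ ∈ eigenSupport (ψ.rep y)) :
    j₂ ∈ MulAction.orbit S.fusion j₁ := by
  have hcard := lt_card_erase_zero_sdiff hψ
  obtain ⟨m₁, hm₁⟩ := card_pos.mp (hcard.trans_le' (Nat.zero_le _))
  obtain ⟨m₂, hm₂, hm⟩ := exists_mem_notMem_of_card_lt_card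
    ((card_orbit_toFinset_le (H := S.fusion) m₁).trans_lt hcard)
  simp only [mem_sdiff, mem_erase, mem_univ, and_true, mem_eigenSupport, not_and,
    not_not] at hm₁ hm₂
  rw [mem_eigenSupport] at hj₁ hj₂
  refine S.mem_orbit_of_eigenMult_ne_zero hj₁.2 (hm₁.2 hm₁.1) hj₂.2 (hm₂.2 hm₂.1)
    (mul_eq_zero_of_not_isUnit _) (mul_eq_zero_of_not_isUnit _) (fun l hl => ?_)
    (fun h => hm (Set.mem_toFinset.mpr h))
  exact stabilizer_eq_bot_of_ne_zero _ (by rcases hl with rfl | rfl | rfl | rfl <;> tauto)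

theorem card_eigenSupport_le_of_mult_linHom_ne_zero
    (hX : Nat.card S.fusion + #(eigenSupport (n := p) (X.rep y)) < p - 1)
    (hy : y ^ p = 1) (hψ : mult (linHom X.rep X.rep) ψ.rep ≠ 0) :
    #(eigenSupport (n := p) (ψ.rep y)) ≤ Nat.card S.fusion * (Nat.card S.fusion + 1) := by
  obtain ⟨μ, hμ⟩ : ∃ μ : ZMod p, ∀ j ∈ eigenSupport (X.rep y), j ∈ MulAction.orbit S.fusion μ := by
    by_cases h : ∃ μ : ZMod p, μ ∈ eigenSupport (X.rep y)
    · obtain ⟨μ, hμ⟩ := h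
      exact ⟨μ, fun j => S.mem_orbit_of_mem_eigenSupport hX hμ⟩
    · exact ⟨0, fun j hj => absurd ⟨j, hj⟩ h⟩
  let T : Finset (ZMod p) := insert 0 (MulAction.orbit S.fusion μ).toFinset
  have hT : #T ≤ Nat.card S.fusion + 1 :=
    (card_insert_le _ _).trans (Nat.succ_le_succ (card_orbit_toFinset_le μ))
  have hmem {s : ZMod p} (hs : eigenMult (X.rep y) s ≠ 0) : s ∈ T := by
    rw [mem_insert, or_iff_not_imp_left, Set.mem_toFinset]
    exact fun h0 => hμ s (mem_eigenSupport.mpr ⟨h0, hs⟩)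
  have hsub : eigenSupport (ψ.rep y) ⊆ T.offDiag.image fun x => x.1 - x.2 := fun j hj => by
    rw [mem_eigenSupport] at hj
    obtain ⟨i, hi, hij⟩ := exists_eigenMult_ne_zero_of_mult_linHom_ne_zero hy hψ hj.2
    exact mem_image.mpr ⟨(i + j, i), mem_offDiag.mpr ⟨hmem hij, hmem hi, by simpa using hj.1⟩,
      add_sub_cancel_left i j⟩
  calc #(eigenSupport (n := p) (ψ.rep y)) ≤ #T * #T - #T :=
        ((card_le_card hsub).trans card_image_le).trans_eq (offDiag_card T)
    _ = (#T - 1) * #T := by rw [Nat.sub_mul, one_mul]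
    _ ≤ _ := Nat.mul_le_mul (by omega) hT

variable {T : Irr (Subgroup.centralizer {y})} {l₀ l₁ : ZMod p}

theorem exists_virtualMult_eq_of_mem_offOrbits
    (hψ : Nat.card S.fusion + #(eigenSupport (n := p) (ψ.rep y)) < p - 1)
    (hl₁ : l₁ ∈ eigenSupport (ψ.rep y)) (hT : T.rep S.self = stdAddChar l₁ • 1)
    (hTψ : mult (ψ.rep.comp (Subgroup.centralizer {y}).subtype) T.rep ≠ 0)
    {l : ZMod p} (hl : l ∈ S.offOrbits l₁ l₀) :
    ∃ Z ≠ ψ, S.virtualMult T.rep (l - l₁) = Pi.single ψ 1 - Pi.single Z 1 := by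
  obtain ⟨hl0, hl1, -⟩ := S.mem_offOrbits.mp hl
  have hlψ : eigenMult (ψ.rep y) l = 0 := by_contra fun h =>
    hl1 (S.mem_orbit_of_mem_eigenSupport hψ hl₁ (mem_eigenSupport.mpr ⟨hl0, h⟩))
  exact S.exists_virtualMult_eq_single_sub_single hT
    (S.virtualMult_pos_of_eigenMult_eq_zero hT hTψ hlψ)
    (stabilizer_eq_bot_of_ne_zero _ (mem_eigenSupport.mp hl₁).1)
    (stabilizer_eq_bot_of_ne_zero _ hl0) hl1 (mul_eq_zero_of_not_isUnit _)

theorem mem_orbit_of_virtualMult_eq (hl₁ : l₁ ≠ 0) (hT : T.rep S.self = stdAddChar l₁ • 1)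
    {Z : Irr G} (hZ : Z ≠ ψ) {l l' : ZMod p} (hl : l ∉ MulAction.orbit S.fusion l₁)
    (hl' : l' ∉ MulAction.orbit S.fusion l₁)
    (h : S.virtualMult T.rep (l - l₁) = Pi.single ψ 1 - Pi.single Z 1)
    (h' : S.virtualMult T.rep (l' - l₁) = Pi.single ψ 1 - Pi.single Z 1) :
    l' ∈ MulAction.orbit S.fusion l := by
  by_contra hll'
  have hone := S.sum_virtualMult_mul_eq_one (s := l - l₁) hT (by rw [Irr.mult_rep_rep, if_pos rfl])
    (stabilizer_eq_bot_of_ne_zero _ hl₁) (mul_eq_zero_of_not_isUnit (l' - l₁)) (by simpa using hl)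
    (by simpa using hl') (by simpa using hll')
  rw [h, h'] at hone
  simp [mul_sub, sum_sub_distrib, Pi.single_apply, hZ, hZ.symm] at hone

theorem card_offOrbits_le_mul_card_image (hl₁ : l₁ ≠ 0) (hT : T.rep S.self = stdAddChar l₁ • 1)
    {Z : ZMod p → Irr G} (hZψ : ∀ l ∈ S.offOrbits l₁ l₀, Z l ≠ ψ)
    (hZ : ∀ l ∈ S.offOrbits l₁ l₀,
      S.virtualMult T.rep (l - l₁) = Pi.single ψ 1 - Pi.single (Z l) 1) :
    #(S.offOrbits l₁ l₀) ≤ Nat.card S.fusion * #((S.offOrbits l₁ l₀).image Z) := by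
  refine card_le_mul_card_image _ _ fun W hW => ?_
  obtain ⟨l, hl, rfl⟩ := mem_image.mp hW
  refine (card_le_card fun l' hl' => ?_).trans (card_orbit_toFinset_le (H := S.fusion) l)
  obtain ⟨hl', hW'⟩ := mem_filter.mp hl'
  exact Set.mem_toFinset.mpr <| S.mem_orbit_of_virtualMult_eq hl₁ hT (hZψ l hl)
    (S.mem_offOrbits.mp hl).2.1 (S.mem_offOrbits.mp hl').2.1 (hZ l hl) (hW' ▸ hZ l' hl')

theorem virtualMult_trivial_eq_of_virtualMult_eq (hl₁ : l₁ ≠ 0)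
    (hl₁₀ : l₁ ∉ MulAction.orbit S.fusion l₀) (hT : T.rep S.self = stdAddChar l₁ • 1)
    {Z : Irr G} {l : ZMod p} (hl : l ∈ S.offOrbits l₁ l₀)
    (hZ : S.virtualMult T.rep (l - l₁) = Pi.single ψ 1 - Pi.single Z 1) :
    S.virtualMult (Irr.trivial (Subgroup.centralizer {y})).rep l₀ Z =
      S.virtualMult (Irr.trivial (Subgroup.centralizer {y})).rep l₀ ψ := by
  obtain ⟨hl0, -, hll₀⟩ := S.mem_offOrbits.mp hl
  have horth := S.sum_virtualMult_mul_eq_zero (σ := (Irr.trivial (Subgroup.centralizer {y})).rep)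
    (i := 0) (s := l₀) (t := l - l₁) (by simp) hT (mul_eq_zero_of_not_isUnit _)
    (notMem_orbit_zero _ hl₁) (by simpa using hl₁₀) (by simpa using notMem_orbit_zero _ hl0)
    (by simpa using hll₀)
  simp only [hZ, Pi.sub_apply, Pi.single_apply, mul_sub, mul_ite, mul_one, mul_zero,
    sum_sub_distrib, sum_ite_eq', mem_univ, if_true] at horth
  exact (sub_eq_zero.mp horth).symm

-- The virtual character attached to the pair `0, l₀` has norm `|S.fusion| + 1`, while its
-- multiplicity at `ψ` is positive and equals its multiplicity at each of the `f - 2` or more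
-- characters `Z l`.
theorem le_card_fusion_add_two {f : ℕ} (hf : Nat.card S.fusion * f = p - 1)
    (hψ : Nat.card S.fusion + #(eigenSupport (n := p) (ψ.rep y)) < p - 1)
    (hscalar : ∀ c : ℂ, ψ.rep y ≠ c • 1)
    (htriv : mult (ψ.rep.comp (Subgroup.centralizer {y}).subtype) (Irr.trivial _).rep ≠ 0) :
    f ≤ Nat.card S.fusion + 2 := by
  have hy : ψ.rep y ^ p = 1 := by rw [← map_pow, S.pow_eq_one, map_one]
  obtain ⟨l₁, hl₁⟩ := eigenSupport_nonempty hy hscalar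
  obtain ⟨l₀, hl₀⟩ := card_pos.mp ((Nat.zero_le _).trans_lt (lt_card_erase_zero_sdiff hψ))
  simp only [mem_sdiff, mem_erase, mem_univ, and_true, mem_eigenSupport, not_and, not_not] at hl₀
  obtain ⟨hl₁0, hl₁ψ⟩ := mem_eigenSupport.mp hl₁
  have hl₁₀ : l₁ ∉ MulAction.orbit S.fusion l₀ := fun h =>
    hl₁ψ ((S.eigenMult_eq_of_mem_orbit ψ.rep h).trans (hl₀.2 hl₀.1))
  obtain ⟨T, hT, hTψ⟩ :=
    S.exists_mult_rep_ne_zero (ψ.rep.comp (Subgroup.centralizer {y}).subtype) hl₁ψ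
  have : Nonempty (Irr G) := ⟨ψ⟩
  choose! Z hZψ hZ using fun (l : ZMod p) (hl : l ∈ S.offOrbits l₁ l₀) =>
    S.exists_virtualMult_eq_of_mem_offOrbits hψ hl₁ hT hTψ hl
  let w := S.virtualMult (Irr.trivial (Subgroup.centralizer {y})).rep l₀
  have hwψ : 0 < w ψ := by
    simpa [w] using S.virtualMult_pos_of_eigenMult_eq_zero (j := 0) (by simp) htriv (hl₀.2 hl₀.1)
  have hw : ∀ W ∈ insert ψ ((S.offOrbits l₁ l₀).image Z), w W ≠ 0 := by
    refine forall_mem_insert _ _ _ |>.mpr ⟨hwψ.ne', forall_mem_image.mpr fun l hl => ?_⟩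
    exact (S.virtualMult_trivial_eq_of_virtualMult_eq hl₁0 hl₁₀ hT hl (hZ l hl)).trans_ne hwψ.ne'
  have hnotMem : ψ ∉ (S.offOrbits l₁ l₀).image Z := fun h => by
    obtain ⟨l, hl, hlψ⟩ := mem_image.mp h
    exact hZψ l hl hlψ
  have hcard := (card_le_sum_mul_self hw).trans_eq
    (S.sum_virtualMult_trivial_mul_self (stabilizer_eq_bot_of_ne_zero _ hl₀.1)
      (mul_eq_zero_of_not_isUnit l₀) hl₀.1)
  rw [card_insert_of_notMem hnotMem] at hcard
  have himage : f - 2 ≤ #((S.offOrbits l₁ l₀).image Z) := by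
    refine Nat.le_of_mul_le_mul_left ?_ (Nat.card_pos (α := S.fusion))
    calc Nat.card S.fusion * (f - 2) = p - 1 - 2 * Nat.card S.fusion := by
          rw [Nat.mul_sub, hf, mul_comm 2]
      _ ≤ _ := S.sub_le_card_offOrbits l₁ l₀
      _ ≤ _ := S.card_offOrbits_le_mul_card_image hl₁0 hT hZψ hZ
  push_cast at hcard
  omega

theorem card_fusion_mul_le_degree {f : ℕ} (hf : Nat.card S.fusion * f = p - 1)
    (hef : Nat.card S.fusion + 3 ≤ f) (hscalar : ∀ ψ ≠ Irr.trivial G, ∀ c : ℂ, ψ.rep y ≠ c • 1)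
    (hX : X ≠ Irr.trivial G) : Nat.card S.fusion * (f - 1) ≤ X.degree := by
  by_contra! hdeg
  have he : 0 < Nat.card S.fusion := Nat.card_pos
  have hXy : X.rep y ^ p = 1 := by rw [← map_pow, S.pow_eq_one, map_one]
  have hsupp : Nat.card S.fusion + #(eigenSupport (n := p) (X.rep y)) < p - 1 := by
    have hle := card_eigenSupport_le hXy
    rw [finrank_fin_fun] at hle
    rw [Nat.mul_sub, hf, mul_one] at hdeg
    omega
  have hmult : 2 ≤ mult (X.rep.comp (Subgroup.centralizer {y}).subtype)
      (X.rep.comp (Subgroup.centralizer {y}).subtype) := by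
    by_contra! hlt
    obtain ⟨c, hc⟩ := exists_eq_smul_of_mult_self_le_one (Nat.le_of_lt_succ hlt) (f := X.rep y)
      fun g =>
        (show Commute y g from (Subgroup.mem_centralizer_singleton_iff.mp g.2).symm).map X.rep
    exact hscalar X hX c hc
  obtain ⟨ψ, hψ, hψX, htriv⟩ := Irr.exists_ne_trivial_mult_linHom_ne_zero _ hmult
  have hψsupp := S.card_eigenSupport_le_of_mult_linHom_ne_zero hsupp S.pow_eq_one hψX
  refine absurd (S.le_card_fusion_add_two hf ?_ (hscalar ψ hψ) htriv) (by omega)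
  nlinarith [Nat.mul_le_mul_left (Nat.card S.fusion) hef]

end CentralizerSplitting

/-! ### Simple groups with a large Sylow subgroup -/

section LargeSylow

variable {G : Type*} [Group G] {p : ℕ}

theorem sylow_ne_top (hpG : ¬IsPGroup p G) (P : Sylow p G) : (P : Subgroup G) ≠ ⊤ := fun h =>
  hpG ((h ▸ P.isPGroup').of_equiv Subgroup.topEquiv)

theorem exists_not_commute_conj [IsSimpleGroup G] (hG : Subgroup.center G = ⊥) {y : G}
    (hy : y ≠ 1) : ∃ g, ¬Commute (g * y * g⁻¹) y := by
  by_contra! h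
  have hle : Subgroup.normalClosure {y} ≤ Subgroup.centralizer {y} := by
    rw [Subgroup.normalClosure, Subgroup.closure_le]
    intro z hz
    obtain ⟨_, rfl, hyz⟩ := Group.mem_conjugatesOfSet_iff.mp hz
    obtain ⟨g, rfl⟩ := isConj_iff.mp hyz
    exact Subgroup.mem_centralizer_singleton_iff.mpr (h g)
  have hy_mem : y ∈ Subgroup.normalClosure {y} := Subgroup.subset_normalClosure rfl
  rcases (Subgroup.normalClosure_normal (s := {y})).eq_bot_or_eq_top with hbot | htop
  · exact hy (Subgroup.mem_bot.mp (hbot ▸ hy_mem))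
  · have hcenter := Subgroup.centralizer_eq_top_iff_subset.mp (top_le_iff.mp (htop ▸ hle))
    exact hy (Subgroup.mem_bot.mp (hG ▸ hcenter rfl))

theorem card_mul_card_centralizer_le [Finite G] {P : Subgroup G} {y g : G}
    (h : ∀ u ∈ P, Commute u (g * y * g⁻¹) → u = 1) :
    Nat.card P * Nat.card (Subgroup.centralizer {y}) ≤ Nat.card G := by
  rw [← Nat.card_prod]
  refine Nat.card_le_card_of_injective
    (fun x : P × Subgroup.centralizer {y} => (x.1 : G) * g * x.2) ?_
  rintro ⟨r, w⟩ ⟨s, v⟩ (he : (r : G) * g * w = s * g * v)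
  have hconj (r : G) (w : Subgroup.centralizer {y}) :
      (r * g * w) * y * (r * g * w)⁻¹ = r * (g * y * g⁻¹) * r⁻¹ := by
    have hw : (w : G) * y * (w : G)⁻¹ = y :=
      mul_inv_eq_of_eq_mul (Subgroup.mem_centralizer_singleton_iff.mp w.2)
    calc (r * g * w) * y * (r * g * w)⁻¹ = r * g * (w * y * (w : G)⁻¹) * g⁻¹ * r⁻¹ := by group
      _ = r * (g * y * g⁻¹) * r⁻¹ := by rw [hw]; group
  have heq : r * (g * y * g⁻¹) * (r : G)⁻¹ = s * (g * y * g⁻¹) * (s : G)⁻¹ := by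
    rw [← hconj r w, ← hconj s v, he]
  have hsr : (s : G)⁻¹ * r = 1 := by
    refine h _ (mul_mem (inv_mem s.2) r.2) ?_
    calc (s : G)⁻¹ * r * (g * y * g⁻¹)
        = (s : G)⁻¹ * (r * (g * y * g⁻¹) * (r : G)⁻¹) * r := by group
      _ = g * y * g⁻¹ * ((s : G)⁻¹ * r) := by rw [heq]; group
  obtain rfl : s = r := Subtype.ext (inv_mul_eq_one.mp hsr)
  exact Prod.ext rfl (Subtype.ext (mul_left_cancel he))

variable [Finite G]

theorem card_sylow_mul_card_centralizer_le [Fact p.Prime] [IsSimpleGroup G]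
    (hG : Subgroup.center G = ⊥) (hsub : ∀ H : Subgroup G, H ≠ ⊤ → IsPSolvable p H)
    {V : Type*} [AddCommGroup V] [Module ℂ V] [FiniteDimensional ℂ V] {σ : Representation ℂ G V}
    (hσ : Function.Injective σ) (hV : finrank ℂ V < p - 1) {P : Subgroup G} (hP : IsPGroup p P)
    {y : G} (hyP : y ∈ P) (hy : y ≠ 1) :
    Nat.card P * Nat.card (Subgroup.centralizer {y}) ≤ Nat.card G := by
  obtain ⟨g, hg⟩ := exists_not_commute_conj hG hy
  refine card_mul_card_centralizer_le (g := g) fun u hu hug => by_contra fun hu1 => hg ?_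
  have hproper : Subgroup.centralizer {u} ≠ ⊤ := fun h =>
    hu1 (Subgroup.mem_bot.mp (hG ▸ Subgroup.centralizer_eq_top_iff_subset.mp h rfl))
  have hyu : Commute y u := commute_of_mem_of_isPGroup hσ (by omega) hP hyP hu
  have hyp : IsPElement p y := .of_mem hP hyP
  exact congrArg Subtype.val <| Commute.eq <| (hsub _ hproper).commute_of_isPElement
    (σ := σ.comp (Subgroup.centralizer {u}).subtype)
    (hσ.comp (Subgroup.subtype_injective _)) hV
    (x := ⟨g * y * g⁻¹, Subgroup.mem_centralizer_singleton_iff.mpr hug.symm⟩)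
    (y := ⟨y, Subgroup.mem_centralizer_singleton_iff.mpr hyu⟩)
    (.of_map (Subgroup.subtype_injective _) (hyp.conj g))
    (.of_map (Subgroup.subtype_injective _) hyp)

theorem card_conjClasses_mul_sq_lt_of_sub_one_le_degree (hp : 3 ≤ p)
    (hdeg : ∀ X : Irr G, X ≠ Irr.trivial G → p - 1 ≤ X.degree) (hG : 2 * p ^ 2 ≤ Nat.card G) :
    Nat.card (ConjClasses G) * p ^ 2 < 3 * Nat.card G := by
  have h := Irr.one_add_card_conjClasses_sub_one_mul_sq_le hdeg
  obtain ⟨k, hk⟩ := Nat.exists_eq_add_of_lt (Nat.card_pos (α := ConjClasses G))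
  obtain ⟨q, rfl⟩ := Nat.exists_eq_add_of_le' (show 1 ≤ p by omega)
  rw [hk] at h ⊢
  simp only [zero_add, Nat.add_sub_cancel] at h ⊢
  have hq : 4 * (q + 1) ^ 2 ≤ 9 * q ^ 2 := by nlinarith
  nlinarith [Nat.mul_le_mul_left k hq]

theorem card_conjClasses_mul_sq_lt_of_sq_le_card_sylow [hp : Fact p.Prime] [IsSimpleGroup G]
    (hG : Subgroup.center G = ⊥) (hp3 : 3 ≤ p) (hpG : ¬IsPGroup p G)
    (hsub : ∀ H : Subgroup G, H ≠ ⊤ → IsPSolvable p H) (P : Sylow p G)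
    (hP : p ^ 2 ≤ Nat.card P) :
    Nat.card (ConjClasses G) * p ^ 2 < 3 * Nat.card G := by
  by_cases! h : ∃ X : Irr G, X ≠ Irr.trivial G ∧ X.degree < p - 1
  · obtain ⟨X, hX, hdeg⟩ := h
    have hdvd : p ∣ Nat.card P := P.isPGroup'.card_eq_or_dvd.resolve_left (by nlinarith)
    obtain ⟨y, hy⟩ := exists_prime_orderOf_dvd_card' p hdvd
    have hy' : orderOf (y : G) = p := (Subgroup.orderOf_coe y).trans hy
    have hcard := card_sylow_mul_card_centralizer_le hG hsub (Irr.rep_injective hX) (by simpa)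
      P.isPGroup' y.2 (fun h => by simp [h, hp.out.ne_one.symm] at hy')
    have := (Nat.mul_le_mul_right (Nat.card (Subgroup.centralizer {(y : G)})) hP).trans hcard
    have := card_conjClasses_mul_sq_le hy'
    have : 0 < Nat.card G := Nat.card_pos
    omega
  · refine card_conjClasses_mul_sq_lt_of_sub_one_le_degree hp3 h ?_
    have hindex : (P : Subgroup G).index ≠ 1 := fun h =>
      sylow_ne_top hpG P (Subgroup.index_eq_one.mp h)
    have : 2 ≤ (P : Subgroup G).index := by
      have := (P : Subgroup G).index_ne_zero_of_finite
      omega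
    rw [← Subgroup.card_mul_index (P : Subgroup G), mul_comm 2]
    gcongr

end LargeSylow

/-! ### Sylow subgroups of prime order -/

section PrimeSylow

variable {G : Type*} [Group G] {y : G} {n : ℕ}

theorem CentralizerSplitting.nonempty_of_coprime_index [Finite G] (hn : orderOf y = n)
    (h : n.Coprime (Subgroup.zpowers y).index) : Nonempty (CentralizerSplitting y n) := by
  let y' : Subgroup.centralizer {y} := ⟨y, Subgroup.mem_centralizer_singleton_iff.mpr rfl⟩
  have hle : Subgroup.zpowers y' ≤ Subgroup.center (Subgroup.centralizer {y}) := by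
    rw [Subgroup.zpowers_le, Subgroup.mem_center_iff]
    exact fun c => Subtype.ext (Subgroup.mem_centralizer_singleton_iff.mp c.2)
  have : (Subgroup.zpowers y').Normal :=
    ⟨fun c hc g => by rwa [Subgroup.mem_center_iff.mp (hle hc) g, mul_inv_cancel_right]⟩
  have hcop : n.Coprime (Subgroup.zpowers y').index := by
    refine h.coprime_dvd_right ⟨(Subgroup.centralizer {y}).index, ?_⟩
    rw [← Subgroup.index_map_subtype, MonoidHom.map_zpowers]
    rfl
  obtain ⟨K, hK⟩ := Subgroup.exists_right_complement'_of_coprime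
    (N := Subgroup.zpowers y') (by rwa [Nat.card_zpowers, Subgroup.orderOf_mk, hn])
  have hsup : K ⊔ Subgroup.zpowers y' = ⊤ := hK.symm.sup_eq_top
  have : K.Normal := Subgroup.normalizer_eq_top_iff.mp <| top_le_iff.mp <| hsup ▸
    sup_le Subgroup.le_normalizer (hle.trans (Subgroup.center_le_normalizer _))
  exact nonempty_of_sup_zpowers_eq_top (y' := y') rfl hn K (hK.symm.index_eq_card ▸ hcop) hsup

theorem CentralizerSplitting.normalizer_zpowers [NeZero n] [Finite G]
    (S : CentralizerSplitting y n) :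
    Subgroup.normalizer (Subgroup.zpowers y : Set G) =
      Subgroup.normalizer (Subgroup.centralizer {y} : Set G) := by
  refine le_antisymm (normalizer_zpowers_le y) (Subgroup.le_normalizer_iff.mpr ?_)
  rintro g hg _ ⟨k, rfl⟩
  rw [← conj_zpow, S.conj_eq_pow_multiplier ⟨g, hg⟩]
  exact zpow_mem (pow_mem (Subgroup.mem_zpowers y) _) k

variable {p : ℕ} [hp : Fact p.Prime]

theorem CentralizerSplitting.card_fusion_dvd (S : CentralizerSplitting y p) :
    Nat.card S.fusion ∣ p - 1 := by
  simpa [Nat.totient_prime hp.out] using S.fusion.card_subgroup_dvd_card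

variable [Finite G]

section

variable [IsSimpleGroup G] (hpG : ¬IsPGroup p G) (hd : p ∣ Nat.card G)
include hpG hd

theorem exists_mem_normalizer_notMem_centralizer (P : Sylow p G) :
    ∃ g ∈ Subgroup.normalizer (P : Set G), g ∉ Subgroup.centralizer (P : Set G) := by
  by_contra! hle
  have hcompl := MonoidHom.ker_transferSylow_isComplement' P hle
  rcases (MonoidHom.transferSylow P hle).normal_ker.eq_bot_or_eq_top with h | h
  · exact sylow_ne_top hpG P (Subgroup.isComplement'_bot_left.mp (h ▸ hcompl))
  · exact P.ne_bot_of_dvd_card hd (Subgroup.isComplement'_top_left.mp (h ▸ hcompl))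

theorem lt_card_sylow : p < Nat.card (Sylow p G) := by
  have hone : Nat.card (Sylow p G) ≠ 1 := fun h => by
    obtain ⟨P⟩ : Nonempty (Sylow p G) := inferInstance
    have : Subsingleton (Sylow p G) := (Nat.card_eq_one_iff_unique.mp h).1
    exact (Subgroup.Normal.eq_bot_or_eq_top P.normal_of_subsingleton).elim
      (P.ne_bot_of_dvd_card hd) (sylow_ne_top hpG P)
  have hpos : 0 < Nat.card (Sylow p G) := Nat.card_pos
  have hdvd := (Nat.modEq_iff_dvd' hpos).mp (card_sylow_modEq_one p G).symm
  have := Nat.le_of_dvd (by omega) hdvd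
  omega

end

namespace CentralizerSplitting

variable (S : CentralizerSplitting y p) {P : Sylow p G} (hP : Subgroup.zpowers y = P)
include hP

theorem card_normalizer_sylow : Nat.card (Subgroup.normalizer (P : Set G)) =
    Nat.card S.fusion * Nat.card (Subgroup.centralizer {y}) := by
  rw [← S.card_normalizer_eq, ← S.normalizer_zpowers, hP]
  rfl

theorem card_eq_card_sylow_mul : Nat.card G =
    Nat.card (Sylow p G) * (Nat.card S.fusion * Nat.card (Subgroup.centralizer {y})) := by
  rw [← S.card_normalizer_sylow hP, P.card_eq_index_normalizer, Subgroup.index_mul_card]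

theorem two_le_card_fusion [IsSimpleGroup G] (hpG : ¬IsPGroup p G) (hd : p ∣ Nat.card G) :
    2 ≤ Nat.card S.fusion := by
  obtain ⟨g, hgN, hgC⟩ := exists_mem_normalizer_notMem_centralizer hpG hd P
  have hC : Subgroup.centralizer {y} = Subgroup.centralizer (P : Set G) := by
    rw [← Subgroup.centralizer_closure {y}, ← Subgroup.zpowers_eq_closure, hP]
    rfl
  have hle : Subgroup.centralizer {y} ≤ Subgroup.normalizer (P : Set G) :=
    hC ▸ Subgroup.centralizer_le_normalizer _
  by_contra! hlt
  refine hgC (hC ▸ Subgroup.eq_of_le_of_card_ge hle ?_ ▸ hgN)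
  rw [S.card_normalizer_sylow hP]
  exact (Nat.mul_le_mul_right _ (Nat.le_of_lt_succ hlt)).trans_eq (one_mul _)

end CentralizerSplitting

end PrimeSylow

-- For `e ≤ 3` the inequality only fails at `(e, f) = (2, 4)` and `(3, 5)`, where `p = 9` and `16`.
theorem sq_add_two_mul_lt_of_prime {e f : ℕ} (hp : (e * f + 1).Prime) (he : 2 ≤ e)
    (hf : f ≤ e + 2) : f ^ 2 + 2 * f < 2 * e * f + 4 := by
  rcases Nat.lt_or_ge e 4 with h | h
  · have : f ≤ 5 := by omega
    interval_cases e <;> interval_cases f <;> revert hp <;> norm_num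
  · nlinarith

theorem succ_mul_sq_lt_of_mul_sq_mul_add_le {e f c g k : ℕ} (he : 2 ≤ e)
    (hf : f ^ 2 + 2 * f < 2 * e * f + 4) (hc : e * f + 1 ≤ c) (hg : (e * f + 2) * (e * c) ≤ g)
    (h : e * (e * f + 1) ^ 2 * k + e + (e * f + 1 + e) * (e * f) ≤
      e * g + (e * f + 1 + e) * (e * f * c)) :
    (k + 1) * (e * f + 1) ^ 2 < 3 * g := by
  obtain ⟨a, rfl⟩ := Nat.exists_eq_add_of_le' (show 1 ≤ e by omega)
  set p := (a + 1) * f + 1 with hp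
  have hdiv : p ^ 2 * k + 1 + (p + (a + 1)) * f ≤ g + (p + (a + 1)) * (f * c) := by
    refine le_of_mul_le_mul_left (a := a + 1) ?_ (by omega)
    calc (a + 1) * (p ^ 2 * k + 1 + (p + (a + 1)) * f)
        = (a + 1) * p ^ 2 * k + (a + 1) + (p + (a + 1)) * ((a + 1) * f) := by ring
      _ ≤ _ := h
      _ = _ := by ring
  have hcoeff : (p + (a + 1)) * f + (a + 1 + a * f) ≤ 2 * ((p + 1) * (a + 1)) := by
    have := Nat.mul_le_mul_left (a + 1) (Nat.succ_le_of_lt hf)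
    rw [hp]
    nlinarith
  have hsq : p ^ 2 ≤ (a + 1 + a * f) * p + (p + (a + 1)) * f := by
    rw [hp]
    nlinarith
  have hcoeff_mul := Nat.mul_le_mul_right c hcoeff
  have hc_mul := Nat.mul_le_mul_left (a + 1 + a * f) hc
  nlinarith

theorem succ_mul_sq_lt_of_one_add_mul_sq_le {e f g k : ℕ} (he : 2 ≤ e) (hf : e + 3 ≤ f)
    (hg : (e * f + 1) ^ 2 < g) (h : 1 + k * (e * (f - 1)) ^ 2 ≤ g) :
    (k + 1) * (e * f + 1) ^ 2 < 3 * g := by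
  obtain ⟨f, rfl⟩ := Nat.exists_eq_add_of_le' (show 1 ≤ f by omega)
  rw [Nat.add_sub_cancel] at h
  have hlin : (e * (f + 1) + 1) * 8 ≤ 11 * (e * f) := by nlinarith
  have hsq : (e * (f + 1) + 1) ^ 2 ≤ 2 * (e * f) ^ 2 := by
    have := Nat.pow_le_pow_left hlin 2
    nlinarith
  nlinarith [Nat.mul_le_mul_left k hsq]

section PrimeSylowBound

variable {G : Type*} [Group G] {p : ℕ} [hp : Fact p.Prime]

namespace CentralizerSplitting

variable {y : G} (S : CentralizerSplitting y p)

section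

variable {V : Type*} [AddCommGroup V] [Module ℂ V] [FiniteDimensional ℂ V]
  (ρ : Representation ℂ G V) (hscalar : ∀ c : ℂ, ρ y ≠ c • 1)
include hscalar

theorem card_fusion_le_card_eigenMult_ne_zero :
    Nat.card S.fusion ≤ #{j : ZMod p | eigenMult (ρ y) j ≠ 0} := by
  obtain ⟨j, hj⟩ :=
    eigenSupport_nonempty (n := p) (by rw [← map_pow, S.pow_eq_one, map_one]) hscalar
  obtain ⟨hj0, hjρ⟩ := mem_eigenSupport.mp hj
  have hcard : #(MulAction.orbit S.fusion j).toFinset = Nat.card S.fusion := by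
    rw [Set.toFinset_card, ← Nat.card_eq_fintype_card,
      Nat.card_congr (MulAction.orbitEquivQuotientStabilizer S.fusion j), ← Subgroup.index,
      stabilizer_eq_bot_of_ne_zero _ hj0, Subgroup.index_bot]
  rw [← hcard]
  refine card_le_card fun i hi => (mem_filter_univ i).mpr ?_
  rwa [S.eigenMult_eq_of_mem_orbit ρ (Set.mem_toFinset.mp hi)]

theorem card_fusion_mul_sq_add_le :
    Nat.card S.fusion * p ^ 2 + (p + Nat.card S.fusion) * finrank ℂ V ^ 2 ≤
      Nat.card S.fusion * finrank ℂ V ^ 2 +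
        (p + Nat.card S.fusion) * (p * ∑ j : ZMod p, eigenMult (ρ y) j ^ 2) := by
  have hy : ρ y ^ p = 1 := by rw [← map_pow, S.pow_eq_one, map_one]
  obtain ⟨s, hs⟩ := Nat.exists_eq_add_of_le (S.card_fusion_le_card_eigenMult_ne_zero ρ hscalar)
  obtain ⟨r, hr⟩ := Nat.exists_eq_add_of_le
    ((card_le_univ {j : ZMod p | eigenMult (ρ y) j ≠ 0}).trans_eq (ZMod.card p))
  have hd := Nat.pow_le_pow_left (card_eigenMult_ne_zero_le_finrank hy) 2
  have hQ := finrank_sq_add_card_eigenMult_ne_zero_mul_le hy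
  rw [Nat.sub_eq_of_eq_add' hr] at hQ
  generalize #{j : ZMod p | eigenMult (ρ y) j ≠ 0} = q at *
  generalize Nat.card S.fusion = e at *
  have hp2 : e * p ^ 2 ≤ e * q ^ 2 + (p + e) * (q * r) := by
    rw [hr, hs]
    exact le_of_le_of_eq (Nat.le_add_right _ ((e + s + r) * r * s)) (by ring)
  calc e * p ^ 2 + (p + e) * finrank ℂ V ^ 2
      ≤ e * q ^ 2 + (p + e) * (q * r) + (p + e) * finrank ℂ V ^ 2 := by gcongr
    _ = e * q ^ 2 + (p + e) * (finrank ℂ V ^ 2 + q * r) := by ring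
    _ ≤ _ := by gcongr

end

variable [Finite G] (hscalar : ∀ X : Irr G, X ≠ Irr.trivial G → ∀ c : ℂ, X.rep y ≠ c • 1)
include hscalar

theorem card_fusion_mul_sq_mul_card_conjClasses_sub_one_add_le (hy : orderOf y = p) :
    Nat.card S.fusion * p ^ 2 * (Nat.card (ConjClasses G) - 1) + Nat.card S.fusion +
        (p + Nat.card S.fusion) * (p - 1) ≤
      Nat.card S.fusion * Nat.card G +
        (p + Nat.card S.fusion) * ((p - 1) * Nat.card (Subgroup.centralizer {y})) := by
  obtain ⟨Q, hQ⟩ : ∃ Q : Irr G → ℕ, ∀ X, Q X = p * ∑ j : ZMod p, eigenMult (X.rep y) j ^ 2 :=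
    ⟨_, fun _ => rfl⟩
  have hX (X : Irr G) (hX : X ∈ univ.erase (Irr.trivial G)) :
      Nat.card S.fusion * p ^ 2 + (p + Nat.card S.fusion) * X.degree ^ 2 ≤
        Nat.card S.fusion * X.degree ^ 2 + (p + Nat.card S.fusion) * Q X := by
    simpa [hQ] using S.card_fusion_mul_sq_add_le X.rep (hscalar X (ne_of_mem_erase hX))
  have hsum := sum_le_sum hX
  have hdeg := Irr.sum_degree_sq (G := G)
  have hsumQ := Irr.sum_mul_sum_eigenMult_sq (G := G) hy
  have htriv := Irr.mul_sum_eigenMult_sq_trivial S.pow_eq_one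
  simp only [← hQ] at hsumQ htriv
  rw [← add_sum_erase _ _ (mem_univ (Irr.trivial G))] at hdeg hsumQ
  rw [Irr.degree_trivial, one_pow] at hdeg
  rw [htriv] at hsumQ
  simp only [sum_add_distrib, ← mul_sum, sum_const, card_erase_of_mem (mem_univ _), card_univ,
    Irr.card_irr, smul_eq_mul] at hsum
  obtain ⟨q, hq⟩ := Nat.exists_eq_add_of_le' hp.out.one_le
  have hQR : ∑ X ∈ univ.erase (Irr.trivial G), Q X + q =
      ∑ X ∈ univ.erase (Irr.trivial G), X.degree ^ 2 + q * Nat.card (Subgroup.centralizer {y}) := by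
    rw [hq, Nat.add_sub_cancel] at hsumQ
    omega
  have := congrArg ((p + Nat.card S.fusion) * ·) hQR
  rw [← hdeg]
  simp only [mul_add, show p - 1 = q by omega] at this hsum ⊢
  linarith

theorem card_conjClasses_mul_sq_lt (hy : orderOf y = p) (he : 2 ≤ Nat.card S.fusion)
    (hG : (p + 1) * (Nat.card S.fusion * Nat.card (Subgroup.centralizer {y})) ≤ Nat.card G) :
    Nat.card (ConjClasses G) * p ^ 2 < 3 * Nat.card G := by
  have hc : p ≤ Nat.card (Subgroup.centralizer {y}) := by
    rw [← hy, ← Nat.card_zpowers]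
    exact Subgroup.card_le_of_le
      (Subgroup.zpowers_le.mpr (Subgroup.mem_centralizer_singleton_iff.mpr rfl))
  obtain ⟨f, hf⟩ := S.card_fusion_dvd
  have hpe : p = Nat.card S.fusion * f + 1 := by have := hp.out.one_lt; omega
  rw [← Nat.sub_add_cancel (Nat.card_pos (α := ConjClasses G))]
  rcases le_or_gt f (Nat.card S.fusion + 2) with hfe | hfe
  · have h := S.card_fusion_mul_sq_mul_card_conjClasses_sub_one_add_le hscalar hy
    rw [hf] at h
    generalize Nat.card S.fusion = e at *
    subst hpe
    exact succ_mul_sq_lt_of_mul_sq_mul_add_le he (sq_add_two_mul_lt_of_prime hp.out he hfe) hc hG h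
  · have h := Irr.one_add_card_conjClasses_sub_one_mul_sq_le fun X hX =>
      S.card_fusion_mul_le_degree hf.symm hfe hscalar hX
    have hsq : p ^ 2 < Nat.card G := by nlinarith [Nat.mul_le_mul he hc]
    generalize Nat.card S.fusion = e at *
    subst hpe
    exact succ_mul_sq_lt_of_one_add_mul_sq_le he hfe hsq h

end CentralizerSplitting

variable [Finite G]

theorem exists_orderOf_eq_and_zpowers_eq {P : Subgroup G} (hP : Nat.card P = p) :
    ∃ y, orderOf y = p ∧ Subgroup.zpowers y = P := by
  obtain ⟨⟨y, hyP⟩, hy⟩ := exists_prime_orderOf_dvd_card' p hP.symm.dvd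
  rw [Subgroup.orderOf_mk] at hy
  exact ⟨y, hy, Subgroup.eq_of_le_of_card_ge (Subgroup.zpowers_le.mpr hyP)
    (by rw [Nat.card_zpowers, hy, hP])⟩

theorem card_conjClasses_mul_sq_lt_of_card_sylow_eq [IsSimpleGroup G]
    (hpG : ¬IsPGroup p G) (P : Sylow p G) (hP : Nat.card P = p) :
    Nat.card (ConjClasses G) * p ^ 2 < 3 * Nat.card G := by
  obtain ⟨y, hy, hyP⟩ := exists_orderOf_eq_and_zpowers_eq hP
  have hd : p ∣ Nat.card G := hy ▸ orderOf_dvd_natCard y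
  have hy_center : y ∉ Subgroup.center G := by
    rw [center_eq_bot_of_isSimpleGroup hd hpG, Subgroup.mem_bot]
    rintro rfl
    exact hp.out.ne_one (hy.symm.trans orderOf_one)
  obtain ⟨S⟩ := CentralizerSplitting.nonempty_of_coprime_index hy
    (hp.out.coprime_iff_not_dvd.mpr (hyP ▸ P.not_dvd_index))
  refine S.card_conjClasses_mul_sq_lt
    (fun X hX => Irr.rep_ne_smul_one (Irr.rep_injective hX) hy_center) hy
    (S.two_le_card_fusion hyP hpG hd) ?_
  rw [S.card_eq_card_sylow_mul hyP]
  exact Nat.mul_le_mul_right _ (lt_card_sylow hpG hd)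

end PrimeSylowBound

/-! ### Reduction to simple groups -/

theorem card_conjClasses_mul_sq_lt_of_isSimpleGroup {G : Type*} [Group G] [Finite G]
    [IsSimpleGroup G] {p : ℕ} [hp : Fact p.Prime] (hd : p ∣ Nat.card G) (hpG : ¬IsPGroup p G)
    (hsub : ∀ H : Subgroup G, H ≠ ⊤ → IsPSolvable p H) :
    Nat.card (ConjClasses G) * p ^ 2 < 3 * Nat.card G := by
  have hG := center_eq_bot_of_isSimpleGroup hd hpG
  rcases hp.out.two_le.eq_or_lt' with rfl | hp3
  · have h := Irr.one_add_card_conjClasses_sub_one_mul_sq_le (G := G) fun X hX =>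
      Irr.two_le_degree (Irr.rep_injective hX) (hG.trans_ne bot_ne_top)
    have : 1 < Nat.card G := Finite.one_lt_card
    omega
  obtain ⟨P⟩ : Nonempty (Sylow p G) := inferInstance
  obtain ⟨n, hn⟩ := IsPGroup.iff_card.mp P.isPGroup'
  match n with
  | 0 => exact absurd (Subgroup.card_eq_one.mp (hn.trans (pow_zero p))) (P.ne_bot_of_dvd_card hd)
  | 1 => exact card_conjClasses_mul_sq_lt_of_card_sylow_eq hpG P (hn.trans (pow_one p))
  | n + 2 =>
    refine card_conjClasses_mul_sq_lt_of_sq_le_card_sylow hG hp3 hpG hsub P (hn ▸ ?_)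
    exact Nat.pow_le_pow_right hp.out.pos (Nat.le_add_left 2 n)

theorem commProb_lt_of_isSimpleGroup {G : Type*} [Group G] [Finite G] [IsSimpleGroup G] {p : ℕ}
    [hp : Fact p.Prime] (hd : p ∣ Nat.card G) (hpG : ¬IsPGroup p G)
    (hsub : ∀ H : Subgroup G, H ≠ ⊤ → IsPSolvable p H) : commProb G < 3 / p ^ 2 := by
  have hG : 0 < Nat.card G := Nat.card_pos
  have hp0 := hp.out.pos
  rw [commProb_def', div_lt_div_iff₀ (by positivity) (by positivity)]
  exact_mod_cast card_conjClasses_mul_sq_lt_of_isSimpleGroup hd hpG hsub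

theorem isPSolvable_of_le_commProb {p : ℕ} [hp : Fact p.Prime] {G : Type*} [Group G] [Finite G]
    (h : 3 / (p : ℚ) ^ 2 ≤ commProb G) : IsPSolvable p G := by
  induction hn : Nat.card G using Nat.strong_induction_on generalizing G with
  | _ n ih =>
    subst hn
    have hsub (H : Subgroup G) (hH : H ≠ ⊤) : IsPSolvable p H :=
      ih _ ((Subgroup.card_le_card_group H).lt_of_ne (mt (Subgroup.eq_top_of_card_eq H) hH))
        (h.trans (commProb_le_commProb_subgroup H)) rfl
    by_cases! hsimple : ∃ N : Subgroup G, N.Normal ∧ N ≠ ⊥ ∧ N ≠ ⊤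
    · obtain ⟨N, hN, hbot, htop⟩ := hsimple
      refine (hsub N htop).of_quotient N
        (ih _ ?_ (h.trans (commProb_le_commProb_quotient N)) rfl)
      rw [Subgroup.card_eq_card_quotient_mul_card_subgroup N]
      exact lt_mul_of_one_lt_right Nat.card_pos ((Subgroup.one_lt_card_iff_ne_bot N).mpr hbot)
    by_cases hpG : IsPGroup p G
    · exact isPSolvable_of_isPGroup hpG
    by_cases hd : p ∣ Nat.card G
    · have : Nontrivial G := not_subsingleton_iff_nontrivial.mp fun _ => hpG fun g =>
        ⟨0, Subsingleton.elim _ _⟩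
      have : IsSimpleGroup G := ⟨fun N hN => or_iff_not_imp_left.mpr (hsimple N hN)⟩
      exact absurd (commProb_lt_of_isSimpleGroup hd hpG hsub) h.not_gt
    · exact isPSolvable_of_coprime (hp.out.coprime_iff_not_dvd.mpr hd).symm

/-- If `k(G) ≥ (3/p²)·|G|`, then the finite group `G` is `p`-solvable. -/
theorem degree_sum_p_solvable_class_number (G : Type*) [Group G] [Fintype G] (p : ℕ)
    (hp : p.Prime)
    (h : (Nat.card (ConjClasses G) : ℝ) ≥ 3 / (p : ℝ) ^ 2 * Nat.card G) :
    IsPSolvable p G := by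
  have : Fact p.Prime := ⟨hp⟩
  have hG : (0 : ℚ) < Nat.card G := mod_cast Nat.card_pos
  refine isPSolvable_of_le_commProb ?_
  rw [commProb_def', le_div_iff₀ hG, ← Rat.cast_le (K := ℝ)]
  push_cast
  exact h
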